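/- arXiv:1405.3261 — 8 statements merged into one kernel-verified Lean document; each statement's English description precedes it below -/
import Mathlib

section
/- Let Ω ⊂ ℝ^N be a bounded open set with C² boundary and let f ∈ C(Ω̄). Then there exists a modulus of continuity m, depending only on N, σ, Ω and f, such that for every ε ∈ (0,1) and every solution u_ε of the Dirichlet problem −I_ε[u_ε] = f in Ω, u_ε = 0 in Ωᶜ, one has |u_ε(x) − u_ε(y)| ≤ m(|x − y|) for all x, y ∈ Ω. -/
open MeasureTheory Metric Set Filter

noncomputable section

/-- The zero-order kernel `K_ε(z) = 1/(ε^{N+2σ} + |z|^{N+2σ})`. -/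
def Kker (N : ℕ) (σ ε : ℝ) (z : EuclideanSpace ℝ (Fin N)) : ℝ :=
  1 / (ε ^ ((N : ℝ) + 2 * σ) + ‖z‖ ^ ((N : ℝ) + 2 * σ))

/-- The zero-order nonlocal operator `I_ε[u](x) = ∫ (u(x+z) - u(x)) K_ε(z) dz`. -/
def Iop (N : ℕ) (σ ε : ℝ) (u : EuclideanSpace ℝ (Fin N) → ℝ)
    (x : EuclideanSpace ℝ (Fin N)) : ℝ :=
  ∫ z, (u (x + z) - u x) * Kker N σ ε z

open Classical in
/-- The signed distance to the boundary of `Ω`. -/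
def sdist (N : ℕ) (Ω : Set (EuclideanSpace ℝ (Fin N))) (x : EuclideanSpace ℝ (Fin N)) : ℝ :=
  if x ∈ closure Ω then Metric.infDist x (frontier Ω) else -Metric.infDist x (frontier Ω)

/-- `Ω` has `C²` boundary with parameter `δ₀`: the boundary is nonempty and the signed
distance is `C²` on the strip `{|d| < δ₀}`. -/
def HasC2Boundary (N : ℕ) (Ω : Set (EuclideanSpace ℝ (Fin N))) (δ₀ : ℝ) : Prop :=
  (frontier Ω).Nonempty ∧ 0 < δ₀ ∧
    ContDiffOn ℝ 2 (sdist N Ω) {x | |sdist N Ω x| < δ₀}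

/-- A modulus of continuity: nonnegative, nondecreasing on `[0,∞)`, vanishing and
continuous at `0`. -/
def IsModulus (m : ℝ → ℝ) : Prop :=
  (∀ t, 0 ≤ m t) ∧ MonotoneOn m (Set.Ici (0 : ℝ)) ∧ m 0 = 0 ∧ ContinuousAt m 0

/-- A (pointwise) solution of the Dirichlet problem `-I_ε[u] = f` in `Ω`, `u = 0` in `Ωᶜ`:
a bounded measurable function, continuous in `Ω`, vanishing outside `Ω`, solving the
equation pointwise in `Ω`. -/
def IsSolution (N : ℕ) (σ : ℝ) (Ω : Set (EuclideanSpace ℝ (Fin N)))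
    (f : EuclideanSpace ℝ (Fin N) → ℝ) (ε : ℝ)
    (u : EuclideanSpace ℝ (Fin N) → ℝ) : Prop :=
  Measurable u ∧ (∃ C, ∀ x, |u x| ≤ C) ∧ ContinuousOn u Ω ∧
    (∀ x, x ∉ Ω → u x = 0) ∧ ∀ x ∈ Ω, -Iop N σ ε u x = f x

section Kernel

variable {N : ℕ} {σ ε : ℝ}

lemma Kden_pos (hε : 0 < ε) (z : EuclideanSpace ℝ (Fin N)) :
    0 < ε ^ ((N : ℝ) + 2 * σ) + ‖z‖ ^ ((N : ℝ) + 2 * σ) := by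
  have := Real.rpow_pos_of_pos hε ((N : ℝ) + 2 * σ)
  have := Real.rpow_nonneg (norm_nonneg z) ((N : ℝ) + 2 * σ)
  linarith

lemma Kker_pos (hε : 0 < ε) (z : EuclideanSpace ℝ (Fin N)) : 0 < Kker N σ ε z :=
  one_div_pos.2 (Kden_pos hε z)

lemma Kker_meas : Measurable (Kker N σ ε) := by
  unfold Kker
  fun_prop

lemma Kker_neg (z : EuclideanSpace ℝ (Fin N)) : Kker N σ ε (-z) = Kker N σ ε z := by
  simp [Kker]

lemma Kker_int (hσ : 0 < σ) (hε : 0 < ε) (hε1 : ε ≤ 1) : Integrable (Kker N σ ε) := by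
  have hs : 0 < (N : ℝ) + 2 * σ := by positivity
  have h1 : Integrable (fun z : EuclideanSpace ℝ (Fin N) =>
      (2 / ε) ^ ((N : ℝ) + 2 * σ) * (1 + ‖z‖) ^ (-((N : ℝ) + 2 * σ))) := by
    apply Integrable.const_mul
    apply integrable_one_add_norm
    simp only [finrank_euclideanSpace, Fintype.card_fin]
    linarith
  refine h1.mono' Kker_meas.aestronglyMeasurable (Eventually.of_forall fun z => ?_)
  rw [Real.norm_of_nonneg (Kker_pos hε z).le]
  have ha := norm_nonneg z
  set a := ‖z‖
  have hpos : 0 < 1 + a := by linarith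
  unfold Kker
  rw [Real.rpow_neg hpos.le, ← div_eq_mul_inv,
    div_le_div_iff₀ (Kden_pos hε z) (Real.rpow_pos_of_pos hpos _), one_mul]
  have h2 : 1 + a ≤ (2 / ε) * max ε a := by
    have e1 : ε ≤ max ε a := le_max_left _ _
    have e2 : a ≤ max ε a := le_max_right _ _
    rw [div_mul_eq_mul_div, le_div_iff₀ hε]
    nlinarith
  have hm : 0 ≤ max ε a := le_max_of_le_right ha
  calc (1 + a) ^ ((N : ℝ) + 2 * σ) ≤ ((2 / ε) * max ε a) ^ ((N : ℝ) + 2 * σ) :=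
        Real.rpow_le_rpow hpos.le h2 hs.le
    _ = (2 / ε) ^ ((N : ℝ) + 2 * σ) * (max ε a) ^ ((N : ℝ) + 2 * σ) :=
        Real.mul_rpow (by positivity) hm
    _ ≤ _ := by
        gcongr
        rcases le_total ε a with h | h
        · rw [max_eq_right h]; have := Real.rpow_nonneg hε.le ((N : ℝ) + 2 * σ); linarith
        · rw [max_eq_left h]; have := Real.rpow_nonneg ha ((N : ℝ) + 2 * σ); linarith

lemma mulK_int (hσ : 0 < σ) (hε : 0 < ε) (hε1 : ε ≤ 1) {g : EuclideanSpace ℝ (Fin N) → ℝ}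
    (hg : Measurable g) {C : ℝ} (hC : ∀ z, |g z| ≤ C) :
    Integrable (fun z => g z * Kker N σ ε z) :=
  (Kker_int hσ hε hε1).bdd_mul hg.aestronglyMeasurable (Eventually.of_forall hC)

/-- lower bound of the tail, uniform in `ε`. -/
lemma tail_lower (hN : 1 ≤ N) (hσ : 0 < σ) (R : ℝ) :
    ∃ c > 0, ∀ ε ∈ Set.Ioo (0 : ℝ) 1,
      c ≤ ∫ z, (if R ≤ ‖z‖ then (1 : ℝ) else 0) * Kker N σ ε z := by
  have : Nonempty (Fin N) := ⟨⟨0, hN⟩⟩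
  have hs : 0 < (N : ℝ) + 2 * σ := by positivity
  have hind : Measurable (fun z : EuclideanSpace ℝ (Fin N) => if R ≤ ‖z‖ then (1 : ℝ) else 0) :=
    Measurable.ite (measurableSet_le measurable_const measurable_norm) measurable_const
      measurable_const
  have hb : ∀ z : EuclideanSpace ℝ (Fin N), |(if R ≤ ‖z‖ then (1 : ℝ) else 0)| ≤ 1 := by
    intro z; split_ifs <;> simp
  refine ⟨∫ z, (if R ≤ ‖z‖ then (1 : ℝ) else 0) * Kker N σ 1 z, ?_, ?_⟩
  · rw [gt_iff_lt, integral_pos_iff_support_of_nonneg]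
    · obtain ⟨w, hw⟩ := NormedSpace.exists_lt_norm ℝ (EuclideanSpace ℝ (Fin N)) R
      have hop : IsOpen {z : EuclideanSpace ℝ (Fin N) | R < ‖z‖} :=
        isOpen_lt continuous_const continuous_norm
      refine (hop.measure_pos volume ⟨w, hw⟩).trans_le (measure_mono fun z hz => ?_)
      have hz' : R ≤ ‖z‖ := le_of_lt hz
      simp [Function.mem_support, hz', (Kker_pos (σ := σ) one_pos z).ne']
    · intro z
      have := (Kker_pos (N := N) (σ := σ) one_pos z).le
      simp only [Pi.zero_apply]
      split_ifs <;> simp [this]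
    · exact mulK_int hσ one_pos le_rfl hind hb
  · rintro ε ⟨hε, hε1⟩
    refine integral_mono (mulK_int hσ one_pos le_rfl hind hb) (mulK_int hσ hε hε1.le hind hb)
      fun z => ?_
    have : Kker N σ 1 z ≤ Kker N σ ε z := by
      unfold Kker
      apply one_div_le_one_div_of_le (Kden_pos hε z)
      have := Real.rpow_le_rpow hε.le hε1.le hs.le
      linarith
    simp only
    split_ifs <;> simp [this]

lemma G_int (hN : 1 ≤ N) (hσ : σ ∈ Set.Ioo (0 : ℝ) 1) :
    Integrable (fun z : EuclideanSpace ℝ (Fin N) =>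
      min 1 (‖z‖ ^ 2) * ‖z‖ ^ (-((N : ℝ) + 2 * σ))) := by
  have : Nonempty (Fin N) := ⟨⟨0, hN⟩⟩
  obtain ⟨h0, h1⟩ := hσ
  rw [integrable_fun_norm_addHaar volume
    (f := fun y : ℝ => min 1 (y ^ 2) * y ^ (-((N : ℝ) + 2 * σ)))]
  simp only [finrank_euclideanSpace, Fintype.card_fin, smul_eq_mul]
  have hU : Ioi (0:ℝ) = Ioc 0 1 ∪ Ioi 1 := by
    rw [Ioc_union_Ioi_eq_Ioi]; norm_num
  have hpow : ∀ y : ℝ, 0 < y → y ^ (N - 1) = y ^ ((N : ℝ) - 1) := by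
    intro y hy
    rw [← Real.rpow_natCast, Nat.cast_sub hN, Nat.cast_one]
  rw [hU]
  refine IntegrableOn.union ?_ ?_
  · have : IntegrableOn (fun y : ℝ => y ^ (1 - 2 * σ)) (Ioc 0 1) := by
      rw [← intervalIntegrable_iff_integrableOn_Ioc_of_le zero_le_one]
      exact intervalIntegral.intervalIntegrable_rpow' (by linarith)
    refine this.congr_fun (fun y hy => ?_) measurableSet_Ioc
    have hy0 : 0 < y := hy.1
    have : min 1 (y ^ 2) = y ^ (2 : ℝ) := by
      rw [min_eq_right (pow_le_one₀ hy0.le hy.2)]; norm_cast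
    simp only
    rw [this, hpow y hy0, ← Real.rpow_add hy0, ← Real.rpow_add hy0]
    congr 1; ring
  · have : IntegrableOn (fun y : ℝ => y ^ (-1 - 2 * σ)) (Ioi 1) :=
      integrableOn_Ioi_rpow_of_lt (by linarith) one_pos
    refine this.congr_fun (fun y hy => ?_) measurableSet_Ioi
    have hy1 : 1 < y := hy
    have hy0 : 0 < y := by linarith
    have : min 1 (y ^ 2) = 1 := min_eq_left (one_le_pow₀ hy1.le)
    simp only
    rw [this, hpow y hy0, one_mul, ← Real.rpow_add hy0]
    congr 1; ring

/-- scaled upper bound. -/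
lemma min_upper (hN : 1 ≤ N) (hσ : σ ∈ Set.Ioo (0 : ℝ) 1) :
    ∃ C > 0, ∀ ε ∈ Set.Ioo (0 : ℝ) 1, ∀ r > 0,
      ∫ z, min 1 (‖z‖ ^ 2 / r ^ 2) * Kker N σ ε z ≤ C * r ^ (-(2 * σ)) := by
  have hG := G_int hN hσ
  set G := fun z : EuclideanSpace ℝ (Fin N) => min 1 (‖z‖ ^ 2) * ‖z‖ ^ (-((N : ℝ) + 2 * σ)) with hGd
  have hs : 0 < (N : ℝ) + 2 * σ := by have := hσ.1; positivity
  have hG0 : 0 ≤ ∫ z, G z := integral_nonneg fun z => by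
    simp only [hGd, Pi.zero_apply]; positivity
  refine ⟨(∫ z, G z) + 1, by linarith, ?_⟩
  rintro ε ⟨hε, hε1⟩ r hr
  have hscale : ∀ z : EuclideanSpace ℝ (Fin N),
      min 1 (‖z‖ ^ 2 / r ^ 2) * ‖z‖ ^ (-((N : ℝ) + 2 * σ))
        = r ^ (-((N : ℝ) + 2 * σ)) * G (r⁻¹ • z) := by
    intro z
    simp only [hGd, norm_smul, norm_inv, Real.norm_of_nonneg hr.le]
    rw [Real.mul_rpow (by positivity) (by positivity), mul_pow, inv_pow,
      Real.inv_rpow hr.le]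
    have := (Real.rpow_pos_of_pos hr (-((N : ℝ) + 2 * σ))).ne'
    rw [div_eq_inv_mul]
    field_simp
  have hI : Integrable (fun z : EuclideanSpace ℝ (Fin N) =>
      r ^ (-((N : ℝ) + 2 * σ)) * G (r⁻¹ • z)) :=
    (hG.comp_smul (inv_ne_zero hr.ne')).const_mul _
  calc ∫ z, min 1 (‖z‖ ^ 2 / r ^ 2) * Kker N σ ε z
      ≤ ∫ z, r ^ (-((N : ℝ) + 2 * σ)) * G (r⁻¹ • z) := by
        apply integral_mono_of_nonneg (Eventually.of_forall fun z => ?_) hI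
          (Eventually.of_forall fun z => ?_)
        · have := (Kker_pos (N := N) (σ := σ) hε z).le
          simp only [Pi.zero_apply]; positivity
        · simp only
          rw [← hscale z]
          rcases eq_or_ne z 0 with rfl | hz
          · simp
          · have hz' : 0 < ‖z‖ := norm_pos_iff.2 hz
            gcongr
            rw [Real.rpow_neg hz'.le]
            unfold Kker
            rw [one_div]
            have := Real.rpow_pos_of_pos hz' ((N : ℝ) + 2 * σ)
            have := Real.rpow_pos_of_pos hε ((N : ℝ) + 2 * σ)
            gcongr
            linarith
    _ = r ^ (-(2 * σ)) * ∫ z, G z := by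
        rw [integral_const_mul, Measure.integral_comp_inv_smul_of_nonneg _ _ hr.le]
        simp only [finrank_euclideanSpace, Fintype.card_fin, smul_eq_mul]
        rw [← mul_assoc, ← Real.rpow_natCast, ← Real.rpow_add hr]
        congr 2; ring
    _ ≤ _ := by
        have := Real.rpow_pos_of_pos hr (-(2 * σ))
        nlinarith

/-- ball lower bound -/
lemma ball_lower (hN : 1 ≤ N) (hσ : σ ∈ Set.Ioo (0 : ℝ) 1) (c : ℝ) (hc : 0 < c) :
    ∃ c1 > 0, ∀ ε ∈ Set.Ioo (0 : ℝ) 1, ∀ r > 0, ε ≤ r → ∀ p q x : EuclideanSpace ℝ (Fin N),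
      ball q (c * r) ⊆ ball p r → x ∈ ball p r →
      c1 * r ^ (-(2 * σ)) ≤
        ∫ z, (ball q (c * r)).indicator (fun _ => (1 : ℝ)) (x + z) * Kker N σ ε z := by
  have : Nonempty (Fin N) := ⟨⟨0, hN⟩⟩
  have hs : 0 < (N : ℝ) + 2 * σ := by have := hσ.1; positivity
  set s := (N : ℝ) + 2 * σ with hsd
  set V := (volume (ball (0 : EuclideanSpace ℝ (Fin N)) 1)).toReal with hV
  have hVpos : 0 < V := ENNReal.toReal_pos (measure_ball_pos _ _ one_pos).ne'
    measure_ball_lt_top.ne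
  refine ⟨c ^ N * V / (2 * 2 ^ s), by positivity, ?_⟩
  rintro ε ⟨hε, hε1⟩ r hr hεr p q x hq hx
  have hset : ∀ z, (ball q (c * r)).indicator (fun _ => (1 : ℝ)) (x + z)
      = (ball (q - x) (c * r)).indicator (fun _ => (1 : ℝ)) z := by
    intro z
    have : x + z ∈ ball q (c * r) ↔ z ∈ ball (q - x) (c * r) := by
      simp only [mem_ball, dist_eq_norm]
      rw [show x + z - q = z - (q - x) by abel]
    by_cases h : z ∈ ball (q - x) (c * r)
    · rw [indicator_of_mem h, indicator_of_mem (this.2 h)]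
    · rw [indicator_of_notMem h, indicator_of_notMem (fun h' => h (this.1 h'))]
  have hK : ∀ z, 1 / (2 * (2 * r) ^ s) * (ball (q - x) (c * r)).indicator (fun _ => (1 : ℝ)) z ≤
      (ball q (c * r)).indicator (fun _ => (1 : ℝ)) (x + z) * Kker N σ ε z := by
    intro z
    rw [hset]
    by_cases hz : z ∈ ball (q - x) (c * r)
    · simp only [indicator_of_mem hz, mul_one, one_mul]
      have h1 : x + z ∈ ball p r := by
        apply hq
        simp only [mem_ball, dist_eq_norm] at hz ⊢
        rwa [show x + z - q = z - (q - x) by abel]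
      have h2 : ‖z‖ ≤ 2 * r := by
        simp only [mem_ball, dist_eq_norm] at h1 hx
        have : z = (x + z - p) - (x - p) := by abel
        rw [this]
        refine (norm_sub_le _ _).trans (by linarith)
      unfold Kker
      apply one_div_le_one_div_of_le (Kden_pos hε z)
      rw [← hsd]
      have e1 : ε ^ s ≤ (2 * r) ^ s := Real.rpow_le_rpow hε.le (by linarith) hs.le
      have e2 : ‖z‖ ^ s ≤ (2 * r) ^ s := Real.rpow_le_rpow (norm_nonneg _) h2 hs.le
      linarith
    · simp [indicator_of_notMem hz]
  have hL : ∫ z, 1 / (2 * (2 * r) ^ s) * (ball (q - x) (c * r)).indicator (fun _ => (1 : ℝ)) z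
      = c ^ N * V / (2 * 2 ^ s) * r ^ (-(2 * σ)) := by
    rw [integral_const_mul, integral_indicator measurableSet_ball]
    simp only [integral_const, MeasurableSet.univ, measureReal_restrict_apply, univ_inter,
      smul_eq_mul, mul_one]
    rw [measureReal_def, Measure.addHaar_ball _ _ (by positivity)]
    simp only [finrank_euclideanSpace, Fintype.card_fin, ENNReal.toReal_mul]
    rw [ENNReal.toReal_ofReal (by positivity), ← hV, Real.mul_rpow (by norm_num) hr.le,
      show -(2 * σ) = (N : ℝ) - s by rw [hsd]; ring, Real.rpow_sub hr, Real.rpow_natCast, mul_pow]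
    have := Real.rpow_pos_of_pos hr s
    have : (0:ℝ) < 2 ^ s := by positivity
    field_simp
  rw [← hL]
  apply integral_mono _ _ hK
  · apply Integrable.const_mul
    rw [integrable_indicator_iff measurableSet_ball]
    exact integrableOn_const measure_ball_lt_top.ne
  · apply mulK_int hσ.1 hε hε1.le (C := 1)
    · exact (measurable_const.indicator measurableSet_ball).comp (measurable_const_add x)
    · intro z; by_cases h : x + z ∈ ball q (c * r) <;> simp [h]

end Kernel
section Geometry

variable {N : ℕ}

lemma exists_frontier_of_ball {Ω : Set (EuclideanSpace ℝ (Fin N))}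
    {x a b : EuclideanSpace ℝ (Fin N)} {δ : ℝ} (ha : a ∈ ball x δ) (hb : b ∈ ball x δ)
    (haΩ : a ∈ Ω) (hbΩ : b ∉ Ω) : ∃ q ∈ frontier Ω, q ∈ ball x δ := by
  by_contra hcon
  push Not at hcon
  have hpre : IsPreconnected (ball x δ) := (convex_ball x δ).isPreconnected
  have hsub : ball x δ ⊆ interior Ω ∪ (closure Ω)ᶜ := by
    intro y hy
    by_cases h1 : y ∈ interior Ω
    · exact Or.inl h1
    · right
      intro h2
      exact hcon y ⟨h2, h1⟩ hy
  have ha' : a ∈ interior Ω := by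
    rcases hsub ha with h | h
    · exact h
    · exact absurd (subset_closure haΩ) h
  have hb' : b ∈ (closure Ω)ᶜ := by
    rcases hsub hb with h | h
    · exact absurd (interior_subset h) hbΩ
    · exact h
  obtain ⟨y, -, hy1, hy2⟩ := hpre _ _ isOpen_interior isClosed_closure.isOpen_compl hsub
    ⟨a, ha, ha'⟩ ⟨b, hb, hb'⟩
  exact hy2 (subset_closure (interior_subset hy1))

lemma abs_sdist (Ω : Set (EuclideanSpace ℝ (Fin N))) (x : EuclideanSpace ℝ (Fin N)) :
    |sdist N Ω x| = infDist x (frontier Ω) := by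
  unfold sdist
  split_ifs
  · exact abs_of_nonneg infDist_nonneg
  · rw [abs_neg]; exact abs_of_nonneg infDist_nonneg

/-- exterior corkscrew condition -/
lemma corkscrew {Ω : Set (EuclideanSpace ℝ (Fin N))} (hΩo : IsOpen Ω)
    {δ₀ : ℝ} (hC2 : HasC2Boundary N Ω δ₀) {p : EuclideanSpace ℝ (Fin N)} (hp : p ∈ frontier Ω) :
    ∃ c > 0, ∃ r₀ > 0, ∀ r > 0, r < r₀ → ∃ q, ball q (c * r) ⊆ ball p r ∧
      ∀ y ∈ ball q (c * r), y ∉ Ω := by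
  obtain ⟨hne, hδ, hd⟩ := hC2
  have hS : {x | |sdist N Ω x| < δ₀} ∈ nhds p := by
    have : {x | |sdist N Ω x| < δ₀} = {x | infDist x (frontier Ω) < δ₀} := by
      ext x; simp only [mem_ofPred_eq, abs_sdist]
    rw [this]
    apply (isOpen_lt (continuous_infDist_pt _) continuous_const).mem_nhds
    simp only [mem_ofPred_eq, infDist_zero_of_mem hp, hδ]
  have hdp : ContDiffAt ℝ 2 (sdist N Ω) p := hd.contDiffAt hS
  have hstrict := hdp.hasStrictFDerivAt (by norm_num)
  set A := fderiv ℝ (sdist N Ω) p with hA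
  have hp0 : sdist N Ω p = 0 := by
    rw [← abs_eq_zero, abs_sdist, infDist_zero_of_mem hp]
  have hA0 : A ≠ 0 := by
    intro h0
    obtain ⟨s, hs, hLip⟩ := hstrict.exists_lipschitzOnWith_of_nnnorm_lt (1 / 2) (by simp [h0])
    obtain ⟨ρ, hρ, hball⟩ := Metric.mem_nhds_iff.1 hs
    obtain ⟨x, hxΩ, hxp⟩ := Metric.mem_closure_iff.1 hp.1 (ρ / 2) (by linarith)
    obtain ⟨q, hq, hqd⟩ := isClosed_frontier.exists_infDist_eq_dist hne x
    have hle : infDist x (frontier Ω) ≤ dist x p := infDist_le_dist_of_mem hp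
    rw [dist_comm] at hxp
    have hxs : x ∈ s := hball (by rw [mem_ball]; linarith)
    have hqs : q ∈ s := hball (by
      rw [mem_ball]
      have := dist_triangle q x p
      rw [dist_comm q x] at this
      linarith)
    have h1 := hLip.dist_le_mul x hxs q hqs
    have hq0 : sdist N Ω q = 0 := by
      rw [← abs_eq_zero, abs_sdist, infDist_zero_of_mem hq]
    rw [hq0, Real.dist_eq, sub_zero, abs_sdist, hqd] at h1
    have hpos : 0 < dist x q := by
      rw [dist_pos]
      rintro rfl
      exact (hΩo.inter_frontier_eq ▸ (⟨hxΩ, hq⟩ : x ∈ Ω ∩ frontier Ω) : x ∈ (∅ : Set _))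
    have : ((1 / 2 : NNReal) : ℝ) = 1 / 2 := by norm_num
    rw [this] at h1
    linarith
  obtain ⟨v, hv⟩ : ∃ v, A v < 0 := by
    obtain ⟨v, hv⟩ : ∃ v, A v ≠ 0 := by
      by_contra h
      push Not at h
      exact hA0 (ContinuousLinearMap.ext h)
    rcases lt_or_gt_of_ne hv with h | h
    · exact ⟨v, h⟩
    · exact ⟨-v, by simpa using h⟩
  set m := -(A v) / 2 with hm
  have hmpos : 0 < m := by rw [hm]; linarith
  have hv0 : 0 ≤ ‖v‖ := norm_nonneg v
  -- along the ray
  have hray : HasDerivAt (fun t : ℝ => sdist N Ω (p + t • v)) (A v) 0 := by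
    have h1 : HasDerivAt (fun t : ℝ => p + t • v) v 0 := by
      simpa using ((hasDerivAt_id (0 : ℝ)).smul_const v).const_add p
    have h2 : HasFDerivAt (sdist N Ω) A (p + (0 : ℝ) • v) := by
      simpa using hstrict.hasFDerivAt
    exact h2.comp_hasDerivAt 0 h1
  have hev : ∀ᶠ t in nhdsWithin (0 : ℝ) (Ioi 0), sdist N Ω (p + t • v) < -(m * t) := by
    have h1 := hray.tendsto_slope_zero_right
    have h2 : A v < -m := by rw [hm]; linarith
    filter_upwards [h1.eventually_lt_const h2, self_mem_nhdsWithin] with t ht ht0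
    have ht0' : 0 < t := ht0
    simp only [zero_add, zero_smul, add_zero, hp0, sub_zero, smul_eq_mul] at ht
    rw [inv_mul_lt_iff₀ ht0'] at ht
    linarith
  obtain ⟨t₀, ht₀, hmem⟩ := mem_nhdsGT_iff_exists_Ioo_subset.1 hev
  have ht₀' : (0 : ℝ) < t₀ := ht₀
  have hD : 0 < ‖v‖ + m := by linarith
  refine ⟨m / (‖v‖ + m), by positivity, t₀ * (‖v‖ + m), by positivity, fun r hr hrr => ?_⟩
  set t := r / (‖v‖ + m) with ht
  have htpos : 0 < t := by positivity
  have htlt : t < t₀ := by rw [ht, div_lt_iff₀ hD]; exact hrr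
  have hdt : sdist N Ω (p + t • v) < -(m * t) := hmem ⟨htpos, htlt⟩
  have hcr : m / (‖v‖ + m) * r = m * t := by rw [ht]; ring
  have hrt : r = t * ‖v‖ + m * t := by rw [ht]; field_simp
  rw [hcr]
  have hmt : 0 < m * t := by positivity
  refine ⟨p + t • v, ?_, ?_⟩
  · apply ball_subset_ball'
    rw [dist_eq_norm, add_sub_cancel_left, norm_smul, Real.norm_of_nonneg htpos.le]
    linarith
  · intro y hy hyΩ
    have hnot : p + t • v ∉ Ω := by
      intro h
      have : 0 ≤ sdist N Ω (p + t • v) := by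
        unfold sdist
        rw [if_pos (subset_closure h)]
        exact infDist_nonneg
      linarith
    obtain ⟨q, hq, hqb⟩ := exists_frontier_of_ball hy (mem_ball_self hmt) hyΩ hnot
    have h1 : infDist (p + t • v) (frontier Ω) ≤ dist (p + t • v) q := infDist_le_dist_of_mem hq
    rw [mem_ball, dist_comm] at hqb
    have h2 := abs_sdist Ω (p + t • v)
    rw [abs_of_neg (by linarith)] at h2
    linarith

end Geometry
section MaxPrinciple

variable {N : ℕ} {σ ε : ℝ}

lemma near_max {X : Type*} (g : X → ℝ) (S : Set X) (hne : S.Nonempty) {C : ℝ}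
    (hC : ∀ x ∈ S, g x ≤ C) {η : ℝ} (hη : 0 < η) : ∃ x ∈ S, ∀ y ∈ S, g y ≤ g x + η := by
  have hb : BddAbove (g '' S) := ⟨C, by rintro _ ⟨x, hx, rfl⟩; exact hC x hx⟩
  obtain ⟨_, ⟨x, hx, rfl⟩, hlt⟩ := exists_lt_of_lt_csSup (hne.image g)
    (show sSup (g '' S) - η < sSup (g '' S) by linarith)
  refine ⟨x, hx, fun y hy => ?_⟩
  have := le_csSup hb ⟨y, hy, rfl⟩
  linarith

lemma Iop_intble (hσ : 0 < σ) (hε : ε ∈ Set.Ioo (0 : ℝ) 1)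
    {u : EuclideanSpace ℝ (Fin N) → ℝ} (hu : Measurable u) {C : ℝ} (hC : ∀ x, |u x| ≤ C)
    (x : EuclideanSpace ℝ (Fin N)) :
    Integrable (fun z => (u (x + z) - u x) * Kker N σ ε z) := by
  refine mulK_int hσ hε.1 hε.2.le (C := C + C)
    ((hu.comp (measurable_const_add x)).sub measurable_const) fun z => ?_
  exact (abs_sub _ _).trans (add_le_add (hC _) (hC _))

lemma Iop_le (hσ : 0 < σ) (hε : ε ∈ Set.Ioo (0 : ℝ) 1)
    {u : EuclideanSpace ℝ (Fin N) → ℝ} (hu : Measurable u) {C : ℝ} (hC : ∀ x, |u x| ≤ C)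
    {B : EuclideanSpace ℝ (Fin N) → ℝ} (hB : Integrable (fun z => B z * Kker N σ ε z))
    (x : EuclideanSpace ℝ (Fin N)) (h : ∀ z, u (x + z) - u x ≤ B z) :
    Iop N σ ε u x ≤ ∫ z, B z * Kker N σ ε z := by
  unfold Iop
  exact integral_mono (Iop_intble hσ hε hu hC x) hB
    fun z => mul_le_mul_of_nonneg_right (h z) (Kker_pos hε.1 z).le

lemma tail_meas (R : ℝ) :
    Measurable (fun z : EuclideanSpace ℝ (Fin N) => if R ≤ ‖z‖ then (1 : ℝ) else 0) :=
  Measurable.ite (measurableSet_le measurable_const measurable_norm) measurable_const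
    measurable_const

lemma tail_bdd (R : ℝ) (z : EuclideanSpace ℝ (Fin N)) :
    |(if R ≤ ‖z‖ then (1 : ℝ) else 0)| ≤ 1 := by
  split_ifs <;> simp

lemma max_principle (hσ : 0 < σ) (hε : ε ∈ Set.Ioo (0 : ℝ) 1)
    {w : EuclideanSpace ℝ (Fin N) → ℝ} (hw : Measurable w) {C : ℝ} (hC : ∀ x, |w x| ≤ C)
    {D : Set (EuclideanSpace ℝ (Fin N))} {R c A B : ℝ} (hc : 0 < c) (hA : 0 ≤ A) (hB : 0 ≤ B)
    (htail : c ≤ ∫ z, (if R ≤ ‖z‖ then (1 : ℝ) else 0) * Kker N σ ε z)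
    (hfar : ∀ x ∈ D, ∀ z, R ≤ ‖z‖ → w (x + z) ≤ 0)
    (hout : ∀ x, x ∉ D → w x ≤ B) (hin : ∀ x ∈ D, -Iop N σ ε w x ≤ A)
    (x : EuclideanSpace ℝ (Fin N)) : w x ≤ B + A / c := by
  by_contra hcon
  push Not at hcon
  set g := w x - (B + A / c) with hg
  have hgpos : 0 < g := by rw [hg]; linarith
  have hKi := Kker_int (N := N) hσ hε.1 hε.2.le
  set κ := ∫ z, Kker N σ ε z with hκ
  have hκ0 : 0 ≤ κ := integral_nonneg fun z => (Kker_pos hε.1 z).le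
  set η := g / (2 * (1 + κ / c)) with hη
  have hden : 0 < 1 + κ / c := by positivity
  have hηpos : 0 < η := by positivity
  have hηg : η + η * κ / c < g := by
    have : η + η * κ / c = g / 2 := by rw [hη]; field_simp
    linarith
  obtain ⟨x1, -, hx1⟩ := near_max w univ ⟨x, mem_univ _⟩ (C := C)
    (fun y _ => (abs_le.1 (hC y)).2) hηpos
  have hxx1 := hx1 x (mem_univ _)
  have hAc : 0 ≤ A / c := by positivity
  have hηκ : 0 ≤ η * κ / c := by positivity
  have hx1D : x1 ∈ D := by
    by_contra h
    have := hout x1 h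
    linarith
  have hw1 : 0 ≤ w x1 := by linarith
  set T := fun z : EuclideanSpace ℝ (Fin N) => if R ≤ ‖z‖ then (1 : ℝ) else 0 with hT
  have hTi : Integrable (fun z => T z * Kker N σ ε z) :=
    mulK_int hσ hε.1 hε.2.le (tail_meas R) (tail_bdd R)
  have hbound := Iop_le hσ hε hw hC (B := fun z => η - w x1 * T z) (x := x1)
    (by
      have : (fun z => (η - w x1 * T z) * Kker N σ ε z) =
          fun z => η * Kker N σ ε z - w x1 * (T z * Kker N σ ε z) := by ext z; ring
      rw [this]
      exact (hKi.const_mul _).sub (hTi.const_mul _))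
    (by
      intro z
      simp only [hT]
      split_ifs with h
      · have := hfar x1 hx1D z h
        linarith
      · have := hx1 (x1 + z) (mem_univ _)
        linarith)
  have hint : ∫ z, (η - w x1 * T z) * Kker N σ ε z = η * κ - w x1 * ∫ z, T z * Kker N σ ε z := by
    have : (fun z => (η - w x1 * T z) * Kker N σ ε z) =
          fun z => η * Kker N σ ε z - w x1 * (T z * Kker N σ ε z) := by ext z; ring
    rw [this, integral_sub (hKi.const_mul _) (hTi.const_mul _), integral_const_mul,
      integral_const_mul]
  rw [hint] at hbound
  have h1 := hin x1 hx1D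
  have h2 : w x1 * c ≤ w x1 * ∫ z, T z * Kker N σ ε z := mul_le_mul_of_nonneg_left htail hw1
  have h3 : w x1 * c ≤ A + η * κ := by linarith
  rw [← le_div_iff₀ hc, add_div] at h3
  linarith

end MaxPrinciple

/-- bounded subsolutions -/
def IsSub (N : ℕ) (σ : ℝ) (Ω : Set (EuclideanSpace ℝ (Fin N))) (F M : ℝ) (ε : ℝ)
    (u : EuclideanSpace ℝ (Fin N) → ℝ) : Prop :=
  Measurable u ∧ (∀ x, |u x| ≤ M) ∧ (∀ x, x ∉ Ω → u x = 0) ∧ ∀ x ∈ Ω, -Iop N σ ε u x ≤ F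

section Boundary

variable {N : ℕ} {σ : ℝ}

lemma odd_int (r : ℝ) (ε : ℝ) (v : EuclideanSpace ℝ (Fin N)) :
    ∫ z, (if ‖z‖ < r then inner ℝ v z else 0) * Kker N σ ε z = 0 := by
  have h := integral_neg_eq_self (fun z => (if ‖z‖ < r then inner ℝ v z else 0) * Kker N σ ε z)
    (volume : Measure (EuclideanSpace ℝ (Fin N)))
  have h2 : ∀ z, (if ‖-z‖ < r then inner ℝ v (-z) else 0) * Kker N σ ε (-z) =
      - ((if ‖z‖ < r then inner ℝ v z else 0) * Kker N σ ε z) := by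
    intro z
    rw [norm_neg, Kker_neg, inner_neg_right]
    split_ifs <;> ring
  simp only [h2] at h
  rw [integral_neg] at h
  linarith

lemma odd_meas (r : ℝ) (v : EuclideanSpace ℝ (Fin N)) :
    Measurable (fun z : EuclideanSpace ℝ (Fin N) => if ‖z‖ < r then inner ℝ v z else 0) :=
  Measurable.ite (measurableSet_lt measurable_norm measurable_const)
    (by fun_prop) measurable_const

lemma odd_bdd {r : ℝ} (hr : 0 < r) (v z : EuclideanSpace ℝ (Fin N)) :
    |if ‖z‖ < r then inner ℝ v z else 0| ≤ ‖v‖ * r := by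
  split_ifs with h
  · exact (abs_real_inner_le_norm v z).trans (by gcongr)
  · simp; positivity

lemma min_meas (r : ℝ) :
    Measurable (fun z : EuclideanSpace ℝ (Fin N) => min 1 (‖z‖ ^ 2 / r ^ 2)) := by fun_prop

lemma min_bdd (r : ℝ) (z : EuclideanSpace ℝ (Fin N)) : |min 1 (‖z‖ ^ 2 / r ^ 2)| ≤ 1 := by
  rw [abs_of_nonneg (by positivity)]
  exact min_le_left _ _

/-- the pointwise bound near a near-maximum point -/
lemma pointwise_bound {u : EuclideanSpace ℝ (Fin N) → ℝ} {p x1 : EuclideanSpace ℝ (Fin N)}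
    {S : Set (EuclideanSpace ℝ (Fin N))}
    {a ℓ r δ M η : ℝ} (ha : 0 < a) (ha8 : a ≤ 1 / 8) (hℓ : 0 < ℓ) (hr : 0 < r) (hrδ : r ≤ δ / 4)
    (hη : 0 < η) (hM : ∀ x, |u x| ≤ M)
    (hS : S ⊆ ball p r) (hS0 : ∀ y ∈ S, u y = 0)
    (hball : ∀ x ∈ ball p δ, u x ≤ ℓ)
    (hx1 : ‖x1 - p‖ < r) (hu1 : (1 - 7 * a / 8) * ℓ ≤ u x1)
    (hmax : ∀ y ∈ ball p δ, u y - a * ℓ * ‖y - p‖ ^ 2 / r ^ 2 ≤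
      u x1 - a * ℓ * ‖x1 - p‖ ^ 2 / r ^ 2 + η) (z : EuclideanSpace ℝ (Fin N)) :
    u (x1 + z) - u x1 ≤ a * ℓ * min 1 (‖z‖ ^ 2 / r ^ 2) + M * min 1 (‖z‖ ^ 2 / (δ / 2) ^ 2) + η
      - ℓ / 2 * S.indicator (fun _ => (1 : ℝ)) (x1 + z)
      + 2 * a * ℓ / r ^ 2 * (if ‖z‖ < r then inner ℝ (x1 - p) z else 0) := by
  have hM0 : 0 ≤ M := (abs_nonneg _).trans (hM x1)
  have hu1' : 0 ≤ u x1 := le_trans (by nlinarith) hu1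
  have hq1 : 0 ≤ M * min 1 (‖z‖ ^ 2 / (δ / 2) ^ 2) := by positivity
  have hq2 : 0 ≤ a * ℓ * min 1 (‖z‖ ^ 2 / r ^ 2) := by positivity
  have haℓ : 0 < a * ℓ := by positivity
  have haℓ8 : a * ℓ ≤ 1 / 8 * ℓ := by gcongr
  have hnormy : ‖x1 + z - p‖ ≤ ‖x1 - p‖ + ‖z‖ := by
    rw [show x1 + z - p = (x1 - p) + z by abel]; exact norm_add_le _ _
  by_cases hz : δ / 2 ≤ ‖z‖
  · have hzS : x1 + z ∉ S := by
      intro h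
      have h1 := hS h
      rw [mem_ball, dist_eq_norm] at h1
      have : ‖z‖ ≤ ‖x1 + z - p‖ + ‖x1 - p‖ := by
        have : z = (x1 + z - p) - (x1 - p) := by abel
        nth_rw 1 [this]
        exact norm_sub_le _ _
      linarith
    have hzr : ¬ ‖z‖ < r := by linarith
    rw [indicator_of_notMem hzS, if_neg hzr]
    have : min 1 (‖z‖ ^ 2 / (δ / 2) ^ 2) = 1 := by
      apply min_eq_left
      rw [one_le_div (by have : 0 < δ := by linarith
                         positivity)]
      have : 0 < δ := by linarith
      gcongr
    rw [this]
    have := (abs_le.1 (hM (x1 + z))).2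
    linarith
  · push Not at hz
    have hyb : x1 + z ∈ ball p δ := by
      rw [mem_ball, dist_eq_norm]; linarith
    by_cases hzr : ‖z‖ < r
    · rw [if_pos hzr]
      have hr2 : 0 < r ^ 2 := by positivity
      have hmin : min 1 (‖z‖ ^ 2 / r ^ 2) = ‖z‖ ^ 2 / r ^ 2 := by
        apply min_eq_right
        rw [div_le_one hr2]
        gcongr
      by_cases hyS : x1 + z ∈ S
      · rw [indicator_of_mem hyS, hS0 _ hyS]
        have hin : -(r ^ 2) ≤ inner ℝ (x1 - p) z := by
          have h1 := (abs_le.1 (abs_real_inner_le_norm (x1 - p) z)).1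
          have h2 : ‖x1 - p‖ * ‖z‖ ≤ r * r := by gcongr
          nlinarith
        have h3 : -(2 * a * ℓ) ≤ 2 * a * ℓ / r ^ 2 * inner ℝ (x1 - p) z := by
          have : -(2 * a * ℓ) = 2 * a * ℓ / r ^ 2 * (-(r ^ 2)) := by field_simp
          rw [this]
          gcongr
        nlinarith
      · rw [indicator_of_notMem hyS, hmin]
        have h1 := hmax _ hyb
        have h2 : ‖x1 + z - p‖ ^ 2 = ‖x1 - p‖ ^ 2 + 2 * inner ℝ (x1 - p) z + ‖z‖ ^ 2 := by
          rw [show x1 + z - p = (x1 - p) + z by abel]; exact norm_add_sq_real _ _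
        rw [h2] at h1
        have h3 : a * ℓ * (‖x1 - p‖ ^ 2 + 2 * inner ℝ (x1 - p) z + ‖z‖ ^ 2) / r ^ 2 =
          a * ℓ * ‖x1 - p‖ ^ 2 / r ^ 2 + 2 * a * ℓ / r ^ 2 * inner ℝ (x1 - p) z
            + a * ℓ * (‖z‖ ^ 2 / r ^ 2) := by ring
        rw [h3] at h1
        linarith
    · rw [if_neg hzr]
      push Not at hzr
      have hmin : min 1 (‖z‖ ^ 2 / r ^ 2) = 1 := by
        apply min_eq_left
        rw [one_le_div (by positivity)]
        gcongr
      rw [hmin]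
      by_cases hyS : x1 + z ∈ S
      · rw [indicator_of_mem hyS, hS0 _ hyS]
        nlinarith
      · rw [indicator_of_notMem hyS]
        have := hball _ hyb
        nlinarith

end Boundary
section Boundary2

variable {N : ℕ} {σ : ℝ}

lemma improve (hN : 1 ≤ N) (hσ : σ ∈ Set.Ioo (0 : ℝ) 1)
    {Ω : Set (EuclideanSpace ℝ (Fin N))} {F M : ℝ} (hF : 0 ≤ F) (hM : 0 ≤ M)
    {p : EuclideanSpace ℝ (Fin N)}
    (hcork : ∃ c > 0, ∃ r₀ > 0, ∀ r > 0, r < r₀ → ∃ q, ball q (c * r) ⊆ ball p r ∧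
      ∀ y ∈ ball q (c * r), y ∉ Ω) :
    ∃ γ, 0 < γ ∧ γ < 1 ∧ ∀ ℓ > 0,
      (∃ δ > 0, ∀ ε ∈ Set.Ioo (0 : ℝ) 1, ε < δ → ∀ u, IsSub N σ Ω F M ε u →
        ∀ x ∈ ball p δ, u x ≤ ℓ) →
      (∃ δ > 0, ∀ ε ∈ Set.Ioo (0 : ℝ) 1, ε < δ → ∀ u, IsSub N σ Ω F M ε u →
        ∀ x ∈ ball p δ, u x ≤ γ * ℓ) := by
  obtain ⟨c, hc, r₀, hr₀, hcork⟩ := hcork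
  obtain ⟨C, hC, hCup⟩ := min_upper hN hσ
  obtain ⟨c1, hc1, hlow⟩ := ball_lower hN hσ c hc
  set a := min (1 / 8) (c1 / (4 * C)) with ha
  have hapos : 0 < a := by positivity
  have ha8 : a ≤ 1 / 8 := min_le_left _ _
  have haC : a * C ≤ c1 / 4 := by
    have : a ≤ c1 / (4 * C) := min_le_right _ _
    calc a * C ≤ c1 / (4 * C) * C := by gcongr
      _ = c1 / 4 := by field_simp
  refine ⟨1 - a / 2, by linarith, by linarith, ?_⟩
  rintro ℓ hℓ ⟨δ, hδ, hbd⟩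
  have htend : Tendsto (fun r : ℝ => r ^ (-(2 * σ))) (nhdsWithin 0 (Ioi 0)) atTop :=
    tendsto_rpow_neg_nhdsGT_zero (by have := hσ.1; linarith)
  set Q := (F + M * (C * (δ / 2) ^ (-(2 * σ))) + 1) / (ℓ * c1 / 4) with hQ
  have hev : ∀ᶠ r in nhdsWithin (0 : ℝ) (Ioi 0), Q < r ^ (-(2 * σ)) ∧ r < min (δ / 4) r₀ ∧ 0 < r :=
    (htend.eventually_gt_atTop Q).and
      (((eventually_lt_nhds (show (0 : ℝ) < min (δ / 4) r₀ by positivity)).filter_mono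
        nhdsWithin_le_nhds).and self_mem_nhdsWithin)
  obtain ⟨r, hrQ, hrlt, hr⟩ := hev.exists
  have hrδ : r < δ / 4 := hrlt.trans_le (min_le_left _ _)
  have hrr₀ : r < r₀ := hrlt.trans_le (min_le_right _ _)
  obtain ⟨q, hqb, hqΩ⟩ := hcork r hr hrr₀
  refine ⟨r / 2, by positivity, ?_⟩
  rintro ε hε hεr u ⟨hum, huM, hu0, hueq⟩ x0 hx0
  by_contra hcon
  push Not at hcon
  have hball := hbd ε hε (by linarith) u ⟨hum, huM, hu0, hueq⟩
  have hKi := Kker_int (N := N) hσ.1 hε.1 hε.2.le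
  set κ := ∫ z, Kker N σ ε z with hκ
  have hκ0 : 0 ≤ κ := integral_nonneg fun z => (Kker_pos hε.1 z).le
  set η := min (a * ℓ / 8) (1 / (1 + κ)) with hη
  have hηpos : 0 < η := by positivity
  have hη8 : η ≤ a * ℓ / 8 := min_le_left _ _
  have hηκ : η * κ ≤ 1 := by
    have : η ≤ 1 / (1 + κ) := min_le_right _ _
    calc η * κ ≤ 1 / (1 + κ) * κ := by gcongr
      _ ≤ 1 := by rw [one_div_mul_eq_div, div_le_one (by positivity)]; linarith
  rw [mem_ball, dist_eq_norm] at hx0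
  obtain ⟨x1, hx1b, hmax⟩ := near_max (fun y => u y - a * ℓ * ‖y - p‖ ^ 2 / r ^ 2) (ball p δ)
    ⟨p, mem_ball_self hδ⟩ (C := M) (fun y _ => by
      have := (abs_le.1 (huM y)).2
      have : 0 ≤ a * ℓ * ‖y - p‖ ^ 2 / r ^ 2 := by positivity
      linarith) hηpos
  have h0 := hmax x0 (by rw [mem_ball, dist_eq_norm]; linarith)
  have h1 : a * ℓ * ‖x0 - p‖ ^ 2 / r ^ 2 ≤ a * ℓ / 4 := by
    have : ‖x0 - p‖ ^ 2 ≤ (r / 2) ^ 2 := by gcongr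
    calc a * ℓ * ‖x0 - p‖ ^ 2 / r ^ 2 ≤ a * ℓ * (r / 2) ^ 2 / r ^ 2 := by gcongr
      _ = a * ℓ / 4 := by field_simp; norm_num
  have hu1a : (1 - 7 * a / 8) * ℓ + a * ℓ * ‖x1 - p‖ ^ 2 / r ^ 2 < u x1 := by nlinarith
  have hpen : 0 ≤ a * ℓ * ‖x1 - p‖ ^ 2 / r ^ 2 := by positivity
  have hu1 : (1 - 7 * a / 8) * ℓ ≤ u x1 := by linarith
  have hx1 : ‖x1 - p‖ < r := by
    have h2 := hball x1 hx1b
    have h3 : a * ℓ * ‖x1 - p‖ ^ 2 / r ^ 2 < a * ℓ := by nlinarith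
    rw [div_lt_iff₀ (by positivity)] at h3
    have h4 : ‖x1 - p‖ ^ 2 < r ^ 2 := lt_of_mul_lt_mul_left h3 (by positivity)
    exact lt_of_pow_lt_pow_left₀ 2 hr.le h4
  have hx1Ω : x1 ∈ Ω := by
    by_contra h
    have := hu0 x1 h
    nlinarith
  have hpt := pointwise_bound (S := ball q (c * r)) hapos ha8 hℓ hr hrδ.le hηpos huM hqb
    (fun y hy => hu0 y (hqΩ y hy)) hball hx1 hu1 hmax
  -- integrals
  have i1 : Integrable (fun z => min 1 (‖z‖ ^ 2 / r ^ 2) * Kker N σ ε z) :=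
    mulK_int hσ.1 hε.1 hε.2.le (min_meas r) (min_bdd r)
  have i2 : Integrable (fun z => min 1 (‖z‖ ^ 2 / (δ / 2) ^ 2) * Kker N σ ε z) :=
    mulK_int hσ.1 hε.1 hε.2.le (min_meas (δ / 2)) (min_bdd (δ / 2))
  have i3 : Integrable (fun z => (ball q (c * r)).indicator (fun _ => (1 : ℝ)) (x1 + z)
      * Kker N σ ε z) := by
    apply mulK_int hσ.1 hε.1 hε.2.le (C := 1)
    · exact (measurable_const.indicator measurableSet_ball).comp (measurable_const_add x1)
    · intro z; by_cases h : x1 + z ∈ ball q (c * r) <;> simp [h]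
  have i4 : Integrable (fun z => (if ‖z‖ < r then inner ℝ (x1 - p) z else 0) * Kker N σ ε z) :=
    mulK_int hσ.1 hε.1 hε.2.le (odd_meas r _) (odd_bdd hr _)
  have hsplit : (fun z => (a * ℓ * min 1 (‖z‖ ^ 2 / r ^ 2) + M * min 1 (‖z‖ ^ 2 / (δ / 2) ^ 2) + η
      - ℓ / 2 * (ball q (c * r)).indicator (fun _ => (1 : ℝ)) (x1 + z)
      + 2 * a * ℓ / r ^ 2 * (if ‖z‖ < r then inner ℝ (x1 - p) z else 0)) * Kker N σ ε z) =
      fun z => a * ℓ * (min 1 (‖z‖ ^ 2 / r ^ 2) * Kker N σ ε z)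
        + M * (min 1 (‖z‖ ^ 2 / (δ / 2) ^ 2) * Kker N σ ε z) + η * Kker N σ ε z
        - ℓ / 2 * ((ball q (c * r)).indicator (fun _ => (1 : ℝ)) (x1 + z) * Kker N σ ε z)
        + 2 * a * ℓ / r ^ 2 *
          ((if ‖z‖ < r then inner ℝ (x1 - p) z else 0) * Kker N σ ε z) := by
    ext z; ring
  have j1 := i1.const_mul (a * ℓ)
  have j2 := i2.const_mul M
  have j0 := hKi.const_mul η
  have j3 := i3.const_mul (ℓ / 2)
  have j4 := i4.const_mul (2 * a * ℓ / r ^ 2)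
  have hfin := Iop_le hσ.1 hε hum huM (x := x1) (B := fun z =>
      a * ℓ * min 1 (‖z‖ ^ 2 / r ^ 2) + M * min 1 (‖z‖ ^ 2 / (δ / 2) ^ 2) + η
      - ℓ / 2 * (ball q (c * r)).indicator (fun _ => (1 : ℝ)) (x1 + z)
      + 2 * a * ℓ / r ^ 2 * (if ‖z‖ < r then inner ℝ (x1 - p) z else 0))
    (by
      rw [hsplit]
      exact (((j1.add j2).add j0).sub j3).add j4) hpt
  have j123 : Integrable (fun z => a * ℓ * (min 1 (‖z‖ ^ 2 / r ^ 2) * Kker N σ ε z)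
        + M * (min 1 (‖z‖ ^ 2 / (δ / 2) ^ 2) * Kker N σ ε z) + η * Kker N σ ε z
        - ℓ / 2 * ((ball q (c * r)).indicator (fun _ => (1 : ℝ)) (x1 + z) * Kker N σ ε z)) :=
    ((j1.add j2).add j0).sub j3
  rw [hsplit, integral_add j123 j4,
    integral_sub ((j1.fun_add j2).fun_add j0) j3, integral_add (j1.fun_add j2) j0, integral_add j1 j2,
    integral_const_mul, integral_const_mul, integral_const_mul, integral_const_mul,
    integral_const_mul, odd_int, ← hκ] at hfin
  have k1 := hCup ε hε r hr
  have k2 := hCup ε hε (δ / 2) (by positivity)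
  have k3 := hlow ε hε r hr (by linarith) p q x1 hqb (by rw [mem_ball, dist_eq_norm]; exact hx1)
  have k4 := hueq x1 hx1Ω
  set P := r ^ (-(2 * σ)) with hP
  have hPpos : 0 < P := Real.rpow_pos_of_pos hr _
  have l1 := mul_le_mul_of_nonneg_left k1 (show 0 ≤ a * ℓ by positivity)
  have l2 := mul_le_mul_of_nonneg_left k2 hM
  have l3 := mul_le_mul_of_nonneg_left k3 (show 0 ≤ ℓ / 2 by positivity)
  have l4 : a * ℓ * (C * P) ≤ ℓ * c1 / 4 * P := by
    calc a * ℓ * (C * P) = (a * C) * (ℓ * P) := by ring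
      _ ≤ c1 / 4 * (ℓ * P) := by gcongr
      _ = _ := by ring
  rw [hQ, div_lt_iff₀ (by positivity)] at hrQ
  linarith

lemma boundary_pt (hN : 1 ≤ N) (hσ : σ ∈ Set.Ioo (0 : ℝ) 1)
    {Ω : Set (EuclideanSpace ℝ (Fin N))} {F M : ℝ} (hF : 0 ≤ F) (hM : 0 ≤ M)
    {p : EuclideanSpace ℝ (Fin N)}
    (hcork : ∃ c > 0, ∃ r₀ > 0, ∀ r > 0, r < r₀ → ∃ q, ball q (c * r) ⊆ ball p r ∧
      ∀ y ∈ ball q (c * r), y ∉ Ω) {η : ℝ} (hη : 0 < η) :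
    ∃ δ > 0, ∀ ε ∈ Set.Ioo (0 : ℝ) 1, ε < δ → ∀ u, IsSub N σ Ω F M ε u →
        ∀ x ∈ ball p δ, u x ≤ η := by
  obtain ⟨γ, hγ0, hγ1, himp⟩ := improve hN hσ hF hM hcork
  have hn : ∀ n : ℕ, ∃ δ > 0, ∀ ε ∈ Set.Ioo (0 : ℝ) 1, ε < δ → ∀ u, IsSub N σ Ω F M ε u →
        ∀ x ∈ ball p δ, u x ≤ γ ^ n * (M + 1) := by
    intro n
    induction n with
    | zero =>
      refine ⟨1, one_pos, fun ε _ _ u hu x _ => ?_⟩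
      have := (abs_le.1 (hu.2.1 x)).2
      simp; linarith
    | succ n ih =>
      have := himp (γ ^ n * (M + 1)) (by positivity) ih
      rw [pow_succ']
      simpa only [mul_assoc] using this
  obtain ⟨n, hn'⟩ := exists_pow_lt_of_lt_one (show 0 < η / (M + 1) by positivity) hγ1
  rw [lt_div_iff₀ (by positivity)] at hn'
  obtain ⟨δ, hδ, h⟩ := hn n
  exact ⟨δ, hδ, fun ε hε hεδ u hu x hx => (h ε hε hεδ u hu x hx).trans hn'.le⟩

lemma boundary_unif (hN : 1 ≤ N) (hσ : σ ∈ Set.Ioo (0 : ℝ) 1)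
    {Ω : Set (EuclideanSpace ℝ (Fin N))} (hΩo : IsOpen Ω) (hΩb : Bornology.IsBounded Ω)
    {δ₀ : ℝ} (hC2 : HasC2Boundary N Ω δ₀)
    {F M : ℝ} (hF : 0 ≤ F) (hM : 0 ≤ M) {η : ℝ} (hη : 0 < η) :
    ∃ δ > 0, ∀ ε ∈ Set.Ioo (0 : ℝ) 1, ε < δ → ∀ u, IsSub N σ Ω F M ε u →
        ∀ x y, y ∉ Ω → ‖x - y‖ < δ → u x ≤ η := by
  have hcomp : IsCompact (frontier Ω) :=
    (hΩb.closure.subset frontier_subset_closure).isCompact_closure.of_isClosed_subset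
      isClosed_frontier subset_closure
  have key : ∃ δ > 0, ∀ ε ∈ Set.Ioo (0 : ℝ) 1, ε < δ → ∀ u, IsSub N σ Ω F M ε u →
        ∀ x, ∀ q ∈ frontier Ω, dist x q < δ → u x ≤ η := by
    refine hcomp.induction_on (p := fun A => ∃ δ > 0, ∀ ε ∈ Set.Ioo (0 : ℝ) 1, ε < δ →
      ∀ u, IsSub N σ Ω F M ε u → ∀ x, ∀ q ∈ A, dist x q < δ → u x ≤ η) ?_ ?_ ?_ ?_
    · exact ⟨1, one_pos, by simp⟩
    · rintro s t hst ⟨δ, hδ, h⟩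
      exact ⟨δ, hδ, fun ε hε h1 u hu x q hq => h ε hε h1 u hu x q (hst hq)⟩
    · rintro s t ⟨δ, hδ, h⟩ ⟨δ', hδ', h'⟩
      refine ⟨min δ δ', by positivity, fun ε hε h1 u hu x q hq hd => ?_⟩
      rcases hq with hq | hq
      · exact h ε hε (h1.trans_le (min_le_left _ _)) u hu x q hq (hd.trans_le (min_le_left _ _))
      · exact h' ε hε (h1.trans_le (min_le_right _ _)) u hu x q hq
          (hd.trans_le (min_le_right _ _))
    · intro p hp
      obtain ⟨δ, hδ, h⟩ := boundary_pt hN hσ hF hM (corkscrew hΩo hC2 hp) hη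
      refine ⟨ball p (δ / 2), mem_nhdsWithin_of_mem_nhds (ball_mem_nhds _ (by positivity)),
        δ / 2, by positivity, fun ε hε h1 u hu x q hq hd => ?_⟩
      refine h ε hε (by linarith) u hu x ?_
      rw [mem_ball] at hq ⊢
      have := dist_triangle x q p
      linarith
  obtain ⟨δ, hδ, h⟩ := key
  refine ⟨δ, hδ, fun ε hε h1 u hu x y hy hxy => ?_⟩
  by_cases hx : x ∈ Ω
  · obtain ⟨q, hq, hqb⟩ := exists_frontier_of_ball (x := x) (δ := δ) (mem_ball_self hδ)
      (by rw [mem_ball, dist_comm, dist_eq_norm]; exact hxy) hx hy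
    exact h ε hε h1 u hu x q hq (by rwa [mem_ball, dist_comm] at hqb)
  · rw [hu.2.2.1 x hx]; exact hη.le

end Boundary2
section Final

variable {N : ℕ} {σ : ℝ}

lemma K_ratio (hσ : 0 < σ) {δ ρ : ℝ} (hδ : 0 < δ) (hρ : 0 < ρ) :
    ∃ τ > 0, ∀ ε, δ ≤ ε → ∀ v w : EuclideanSpace ℝ (Fin N), ‖v - w‖ < τ →
      Kker N σ ε v ≤ (1 + ρ) * Kker N σ ε w := by
  have hs : 0 < (N : ℝ) + 2 * σ := by positivity
  set s := (N : ℝ) + 2 * σ with hsd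
  have hc1 : ContinuousAt (fun t : ℝ => (1 + t) ^ s) 0 :=
    (continuousAt_const.add continuousAt_id).rpow_const (Or.inl (by norm_num))
  have hc2 : ContinuousAt (fun t : ℝ => (2 * t) ^ s) 0 :=
    (continuousAt_const.mul continuousAt_id).rpow_const (Or.inr hs.le)
  have e1 : ∀ᶠ t in nhds (0 : ℝ), (1 + t) ^ s < 1 + ρ :=
    hc1.eventually_lt continuousAt_const (by simp [hρ])
  have e2 : ∀ᶠ t in nhds (0 : ℝ), (2 * t) ^ s < ρ :=
    hc2.eventually_lt continuousAt_const (by simp [hρ, Real.zero_rpow hs.ne'])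
  have e3 : ∀ᶠ t in nhds (0 : ℝ), t < 1 := eventually_lt_nhds one_pos
  obtain ⟨t, ⟨h1, h2, h3⟩, ht⟩ := (((e1.and (e2.and e3)).filter_mono nhdsWithin_le_nhds).and
    (self_mem_nhdsWithin : Ioi (0 : ℝ) ∈ nhdsWithin 0 (Ioi 0))).exists
  have ht0 : 0 < t := ht
  refine ⟨t ^ 2 * δ, by positivity, fun ε hε v w hvw => ?_⟩
  have hεpos : 0 < ε := by linarith
  have hEs := Real.rpow_pos_of_pos hεpos s
  have hvs := Real.rpow_nonneg (norm_nonneg v) s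
  have hws : ‖w‖ ≤ ‖v‖ + t ^ 2 * ε := by
    have : ‖w‖ ≤ ‖v‖ + ‖v - w‖ := by
      have : w = v - (v - w) := by abel
      nth_rw 1 [this]
      exact norm_sub_le _ _
    have : t ^ 2 * δ ≤ t ^ 2 * ε := by gcongr
    linarith
  unfold Kker
  rw [← hsd, mul_one_div, div_le_div_iff₀ (Kden_pos hεpos v) (Kden_pos hεpos w), one_mul]
  rcases le_total (t * ε) ‖v‖ with h | h
  · have hle : ‖w‖ ≤ (1 + t) * ‖v‖ := by nlinarith
    have : ‖w‖ ^ s ≤ (1 + ρ) * ‖v‖ ^ s := by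
      calc ‖w‖ ^ s ≤ ((1 + t) * ‖v‖) ^ s := Real.rpow_le_rpow (norm_nonneg _) hle hs.le
        _ = (1 + t) ^ s * ‖v‖ ^ s := Real.mul_rpow (by linarith) (norm_nonneg _)
        _ ≤ _ := by gcongr
    nlinarith
  · have hle : ‖w‖ ≤ (2 * t) * ε := by
      have : t ^ 2 * ε ≤ t * ε := by
        have : t ^ 2 ≤ t := by nlinarith
        gcongr
      linarith
    have : ‖w‖ ^ s ≤ ρ * ε ^ s := by
      calc ‖w‖ ^ s ≤ ((2 * t) * ε) ^ s := Real.rpow_le_rpow (norm_nonneg _) hle hs.le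
        _ = (2 * t) ^ s * ε ^ s := Real.mul_rpow (by linarith) hεpos.le
        _ ≤ _ := by gcongr
    nlinarith

lemma Iop_eq (hσ : 0 < σ) {ε : ℝ} (hε : ε ∈ Set.Ioo (0 : ℝ) 1)
    {u : EuclideanSpace ℝ (Fin N) → ℝ} (hu : Measurable u) {C : ℝ} (hC : ∀ x, |u x| ≤ C)
    (x : EuclideanSpace ℝ (Fin N)) :
    Iop N σ ε u x = (∫ w, u w * Kker N σ ε (w - x)) - u x * ∫ z, Kker N σ ε z := by
  have hKi := Kker_int (N := N) hσ hε.1 hε.2.le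
  have h1 : Integrable (fun z => u (x + z) * Kker N σ ε z) :=
    mulK_int hσ hε.1 hε.2.le (hu.comp (measurable_const_add x)) (fun z => hC _)
  have h2 : ∫ w, u w * Kker N σ ε (w - x) = ∫ z, u (x + z) * Kker N σ ε z := by
    rw [← integral_add_left_eq_self (fun w => u w * Kker N σ ε (w - x)) x]
    simp
  rw [h2, ← integral_const_mul, ← integral_sub h1 (hKi.const_mul _)]
  unfold Iop
  congr 1
  ext z
  ring

lemma Iop_neg {ε : ℝ} (u : EuclideanSpace ℝ (Fin N) → ℝ) (x : EuclideanSpace ℝ (Fin N)) :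
    Iop N σ ε (fun y => - u y) x = - Iop N σ ε u x := by
  unfold Iop
  rw [← integral_neg]
  congr 1
  ext z
  ring

lemma fixed_scale (hσ : 0 < σ) {ε : ℝ} (hε : ε ∈ Set.Ioo (0 : ℝ) 1)
    {u : EuclideanSpace ℝ (Fin N) → ℝ} (hu : Measurable u) {M : ℝ} (hM : ∀ x, |u x| ≤ M)
    {c ω ρ : ℝ} (hc : 0 < c) (hω : 0 ≤ ω) (hκc : c ≤ ∫ z, Kker N σ ε z)
    {x y : EuclideanSpace ℝ (Fin N)}
    (hxy : -Iop N σ ε u x - -Iop N σ ε u y ≤ ω)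
    (h1 : ∀ w, Kker N σ ε (w - x) ≤ (1 + ρ) * Kker N σ ε (w - y))
    (h2 : ∀ w, Kker N σ ε (w - y) ≤ (1 + ρ) * Kker N σ ε (w - x)) :
    u x - u y ≤ ω / c + 2 * M * ρ := by
  have hKi := Kker_int (N := N) hσ hε.1 hε.2.le
  have hM0 : 0 ≤ M := (abs_nonneg _).trans (hM x)
  rw [Iop_eq hσ hε hu hM, Iop_eq hσ hε hu hM] at hxy
  set κ := ∫ z, Kker N σ ε z with hκ
  have hκpos : 0 < κ := by linarith
  have ik : ∀ a, Integrable (fun w => Kker N σ ε (w - a)) := fun a => hKi.comp_sub_right a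
  have ek : ∀ a, ∫ w, Kker N σ ε (w - a) = κ := fun a => integral_sub_right_eq_self _ a
  have iu : ∀ a, Integrable (fun w => u w * Kker N σ ε (w - a)) := fun a =>
    (ik a).bdd_mul hu.aestronglyMeasurable (Eventually.of_forall hM)
  have hdiff : (∫ w, u w * Kker N σ ε (w - x)) - (∫ w, u w * Kker N σ ε (w - y))
      ≤ 2 * M * ρ * κ := by
    rw [← integral_sub (iu x) (iu y)]
    calc ∫ w, (u w * Kker N σ ε (w - x) - u w * Kker N σ ε (w - y))
        ≤ ∫ w, M * ρ * (Kker N σ ε (w - x) + Kker N σ ε (w - y)) := by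
          refine integral_mono ((iu x).sub (iu y)) (((ik x).add (ik y)).const_mul _) fun w => ?_
          simp only
          have a1 := h1 w
          have a2 := h2 w
          have p1 := Kker_pos (N := N) (σ := σ) hε.1 (w - x)
          have p2 := Kker_pos (N := N) (σ := σ) hε.1 (w - y)
          set k1 := Kker N σ ε (w - x)
          set k2 := Kker N σ ε (w - y)
          have hρ' : 0 ≤ ρ * (k1 + k2) := by nlinarith
          have hρ0 : 0 ≤ ρ := nonneg_of_mul_nonneg_left hρ' (by linarith)
          have habs : |k1 - k2| ≤ ρ * (k1 + k2) := by
            rw [abs_le]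
            have := mul_nonneg hρ0 p1.le
            have := mul_nonneg hρ0 p2.le
            constructor <;> nlinarith
          calc u w * k1 - u w * k2 = u w * (k1 - k2) := by ring
            _ ≤ |u w| * |k1 - k2| := by rw [← abs_mul]; exact le_abs_self _
            _ ≤ M * (ρ * (k1 + k2)) := by gcongr; exact hM w
            _ = _ := by ring
      _ = 2 * M * ρ * κ := by
          rw [integral_const_mul, integral_add (ik x) (ik y), ek, ek]; ring
  have h3 : (u x - u y) * κ ≤ ω + 2 * M * ρ * κ := by linarith
  have h4 : u x - u y ≤ (ω + 2 * M * ρ * κ) / κ := (le_div_iff₀ hκpos).2 h3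
  have h5 : (ω + 2 * M * ρ * κ) / κ = ω / κ + 2 * M * ρ := by field_simp
  have h6 : ω / κ ≤ ω / c := by gcongr
  linarith

lemma equicont (hN : 1 ≤ N) (hσ : σ ∈ Set.Ioo (0 : ℝ) 1)
    {Ω : Set (EuclideanSpace ℝ (Fin N))} (hΩo : IsOpen Ω) (hΩb : Bornology.IsBounded Ω)
    (hC2 : ∃ δ₀, HasC2Boundary N Ω δ₀)
    {f : EuclideanSpace ℝ (Fin N) → ℝ} (hf : ContinuousOn f (closure Ω)) :
    ∃ M ≥ 0, (∀ ε ∈ Set.Ioo (0 : ℝ) 1, ∀ u, IsSolution N σ Ω f ε u → ∀ x, |u x| ≤ M) ∧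
      ∀ η > 0, ∃ τ > 0, ∀ ε ∈ Set.Ioo (0 : ℝ) 1, ∀ u, IsSolution N σ Ω f ε u →
        ∀ x ∈ Ω, ∀ y ∈ Ω, ‖x - y‖ < τ → u x - u y ≤ η := by
  obtain ⟨δ₀, hC2⟩ := hC2
  have hcomp : IsCompact (closure Ω) := hΩb.isCompact_closure
  obtain ⟨F, hF⟩ := hcomp.exists_bound_of_continuousOn hf
  have hF0 : 0 ≤ max F 0 := le_max_right _ _
  have hfF : ∀ x ∈ Ω, |f x| ≤ max F 0 := fun x hx =>
    (hF x (subset_closure hx)).trans (le_max_left _ _)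
  set F' := max F 0
  obtain ⟨R0, hR0⟩ := hΩb.subset_ball (0 : EuclideanSpace ℝ (Fin N))
  set R := 2 * max R0 0 + 1 with hR
  have hRpos : 0 < R := by have := le_max_right R0 0; rw [hR]; linarith
  have hfar1 : ∀ x ∈ Ω, ∀ z, R ≤ ‖z‖ → x + z ∉ Ω := by
    intro x hx z hz h
    have h1 := hR0 hx
    have h2 := hR0 h
    rw [mem_ball_zero_iff] at h1 h2
    have h3 : ‖z‖ ≤ ‖x + z‖ + ‖x‖ := by
      have : z = (x + z) - x := by abel
      nth_rw 1 [this]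
      exact norm_sub_le _ _
    have := le_max_left R0 0
    linarith
  obtain ⟨c, hc, htail⟩ := tail_lower hN hσ.1 R
  have hκc : ∀ ε ∈ Set.Ioo (0 : ℝ) 1, c ≤ ∫ z, Kker N σ ε z := by
    intro ε hε
    refine (htail ε hε).trans (integral_mono
      (mulK_int hσ.1 hε.1 hε.2.le (tail_meas R) (tail_bdd R))
      (Kker_int hσ.1 hε.1 hε.2.le) fun z => ?_)
    have := (Kker_pos (N := N) (σ := σ) hε.1 z).le
    simp only
    split_ifs <;> simp [this]
  have hM0 : 0 ≤ F' / c := by positivity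
  have hbd : ∀ ε ∈ Set.Ioo (0 : ℝ) 1, ∀ u, IsSolution N σ Ω f ε u → ∀ x, |u x| ≤ F' / c := by
    rintro ε hε u ⟨hum, ⟨C, hC⟩, -, hu0, hueq⟩ x
    have h1 := max_principle hσ.1 hε hum hC hc hF0 le_rfl (htail ε hε)
      (fun x hx z hz => (hu0 _ (hfar1 x hx z hz)).le) (fun x hx => (hu0 x hx).le)
      (fun x hx => by rw [hueq x hx]; exact (abs_le.1 (hfF x hx)).2) x
    have h2 := max_principle (w := fun y => - u y) hσ.1 hε hum.neg
      (fun x => by rw [abs_neg]; exact hC x) hc hF0 le_rfl (htail ε hε)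
      (fun x hx z hz => by simp [hu0 _ (hfar1 x hx z hz)]) (fun x hx => by simp [hu0 x hx])
      (fun x hx => by rw [Iop_neg, hueq x hx]; have := (abs_le.1 (hfF x hx)).1; linarith) x
    rw [abs_le]
    constructor <;> linarith
  refine ⟨F' / c, hM0, hbd, fun η hη => ?_⟩
  set M := F' / c
  have hsub : ∀ ε ∈ Set.Ioo (0 : ℝ) 1, ∀ u, IsSolution N σ Ω f ε u →
      IsSub N σ Ω F' M ε u ∧ IsSub N σ Ω F' M ε (fun y => - u y) := by
    rintro ε hε u hu
    have hb := hbd ε hε u hu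
    obtain ⟨hum, -, -, hu0, hueq⟩ := hu
    refine ⟨⟨hum, hb, hu0, fun x hx => ?_⟩, hum.neg, fun x => by rw [abs_neg]; exact hb x,
      fun x hx => by simp [hu0 x hx], fun x hx => ?_⟩
    · rw [hueq x hx]; exact (abs_le.1 (hfF x hx)).2
    · rw [Iop_neg, hueq x hx]; have := (abs_le.1 (hfF x hx)).1; linarith
  obtain ⟨δ, hδ, hbdry⟩ := boundary_unif hN hσ hΩo hΩb hC2 hF0 hM0 (half_pos hη)
  have huc := hcomp.uniformContinuousOn_of_continuous hf
  rw [Metric.uniformContinuousOn_iff] at huc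
  obtain ⟨τ1, hτ1, hfu⟩ := huc (c * (η / 2)) (by positivity)
  have hfu' : ∀ x ∈ Ω, ∀ y ∈ Ω, ‖x - y‖ < τ1 → f x - f y ≤ c * (η / 2) := by
    intro x hx y hy hxy
    have := hfu x (subset_closure hx) y (subset_closure hy) (by rwa [dist_eq_norm])
    rw [Real.dist_eq] at this
    exact (le_abs_self _).trans this.le
  have hρ : 0 < η / (4 * (M + 1)) := by positivity
  obtain ⟨τ2, hτ2, hK⟩ := K_ratio (N := N) hσ.1 hδ hρ
  obtain ⟨c', hc', htail'⟩ : ∃ c' > 0, ∀ ε ∈ Set.Ioo (0 : ℝ) 1,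
      c' ≤ ∫ z, (if R + 1 ≤ ‖z‖ then (1 : ℝ) else 0) * Kker N σ ε z :=
    tail_lower hN hσ.1 (R + 1)
  obtain ⟨τ3, hτ3, hfu3⟩ := huc (c' * (η / 2)) (by positivity)
  have hfu3' : ∀ x ∈ Ω, ∀ y ∈ Ω, ‖x - y‖ < τ3 → f x - f y ≤ c' * (η / 2) := by
    intro x hx y hy hxy
    have := hfu3 x (subset_closure hx) y (subset_closure hy) (by rwa [dist_eq_norm])
    rw [Real.dist_eq] at this
    exact (le_abs_self _).trans this.le
  refine ⟨min (min τ1 τ2) (min (min τ3 1) δ), by positivity, ?_⟩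
  intro ε hε u hu x hx y hy hxy
  simp only [lt_min_iff] at hxy
  obtain ⟨⟨hxy1, hxy2⟩, ⟨hxy3, hxy4⟩, hxy5⟩ := hxy
  have hb := hbd ε hε u hu
  obtain ⟨hs1, hs2⟩ := hsub ε hε u hu
  obtain ⟨hum, -, -, hu0, hueq⟩ := hu
  rcases le_or_gt δ ε with hδε | hδε
  · have h := fixed_scale (ω := c * (η / 2)) (ρ := η / (4 * (M + 1))) (x := x) (y := y)
      hσ.1 hε hum hb hc (by positivity) (hκc ε hε)
      (by rw [hueq x hx, hueq y hy]; exact hfu' x hx y hy hxy1)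
      (fun w => hK ε hδε _ _ (by
        rw [show w - x - (w - y) = -(x - y) by abel, norm_neg]; exact hxy2))
      (fun w => hK ε hδε _ _ (by
        rw [show w - y - (w - x) = x - y by abel]; exact hxy2))
    have e1 : c * (η / 2) / c = η / 2 := by field_simp
    have e2 : 2 * M * (η / (4 * (M + 1))) ≤ η / 2 := by
      rw [mul_div_assoc', div_le_div_iff₀ (by positivity) (by norm_num)]
      nlinarith
    linarith
  · -- translation
    set h := x - y with hh
    have hw : Measurable (fun a => u (a + h) - u a) :=
      (hum.comp (measurable_add_const h)).sub hum
    have hwI : ∀ a, Iop N σ ε (fun a => u (a + h) - u a) a =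
        Iop N σ ε u (a + h) - Iop N σ ε u a := by
      intro a
      unfold Iop
      rw [← integral_sub (Iop_intble hσ.1 hε hum hb (a + h)) (Iop_intble hσ.1 hε hum hb a)]
      congr 1
      ext z
      simp only
      rw [show a + z + h = a + h + z by abel]
      ring
    have hmp := max_principle (D := {a | a ∈ Ω ∧ a + h ∈ Ω}) (B := η / 2) (A := c' * (η / 2))
      (C := M + M) hσ.1 hε hw
      (fun a => (abs_sub _ _).trans (add_le_add (hb _) (hb _))) hc' (by positivity)
      (by positivity) (htail' ε hε)
      (by
        rintro a ⟨ha1, ha2⟩ z hz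
        rw [hu0 (a + z) (hfar1 a ha1 z (by linarith)),
          show a + z + h = a + h + z by abel, hu0 (a + h + z) (hfar1 _ ha2 z (by linarith))]
        simp)
      (by
        intro a ha
        by_cases ha1 : a ∈ Ω
        · have ha2 : a + h ∉ Ω := fun h' => ha ⟨ha1, h'⟩
          rw [hu0 _ ha2]
          have := hbdry ε hε hδε _ hs2 a (a + h) ha2 (by
            rw [show a - (a + h) = -h by abel, norm_neg]; exact hxy5)
          linarith
        · rw [hu0 _ ha1]
          have := hbdry ε hε hδε _ hs1 (a + h) a ha1 (by
            rw [add_sub_cancel_left]; exact hxy5)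
          linarith)
      (by
        rintro a ⟨ha1, ha2⟩
        rw [hwI]
        have e1 := hueq a ha1
        have e2 := hueq _ ha2
        have := hfu3' (a + h) ha2 a ha1 (by rw [add_sub_cancel_left]; exact hxy3)
        linarith) y
    have e1 : c' * (η / 2) / c' = η / 2 := by field_simp
    rw [e1] at hmp
    simp only [hh, add_sub_cancel] at hmp
    linarith

end Final

/-- uniform (in `ε`) modulus of continuity in `Ω` for solutions of the
Dirichlet problem. -/
theorem statement0 (N : ℕ) (hN : 1 ≤ N) (σ : ℝ) (hσ : σ ∈ Set.Ioo (0 : ℝ) 1)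
    (Ω : Set (EuclideanSpace ℝ (Fin N))) (hΩo : IsOpen Ω) (hΩb : Bornology.IsBounded Ω)
    (hC2 : ∃ δ₀, HasC2Boundary N Ω δ₀)
    (f : EuclideanSpace ℝ (Fin N) → ℝ) (hf : ContinuousOn f (closure Ω)) :
    ∃ m : ℝ → ℝ, IsModulus m ∧
      ∀ ε ∈ Set.Ioo (0 : ℝ) 1, ∀ u : EuclideanSpace ℝ (Fin N) → ℝ,
        IsSolution N σ Ω f ε u →
          ∀ x ∈ Ω, ∀ y ∈ Ω, |u x - u y| ≤ m ‖x - y‖ := by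
  obtain ⟨M, hM0, hbd, heq⟩ := equicont hN hσ hΩo hΩb hC2 hf
  set S : ℝ → Set ℝ := fun t => {a | a = 0 ∨ ∃ ε ∈ Set.Ioo (0 : ℝ) 1, ∃ u,
    IsSolution N σ Ω f ε u ∧ ∃ x ∈ Ω, ∃ y ∈ Ω, ‖x - y‖ ≤ t ∧ a = |u x - u y|} with hS
  have hbdd : ∀ t, BddAbove (S t) := by
    intro t
    refine ⟨M + M, ?_⟩
    rintro a (rfl | ⟨ε, hε, u, hu, x, hx, y, hy, hxy, rfl⟩)
    · linarith
    · exact (abs_sub _ _).trans (add_le_add (hbd ε hε u hu x) (hbd ε hε u hu y))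
  have h0S : ∀ t, (0 : ℝ) ∈ S t := fun t => Or.inl rfl
  have hnn : ∀ t, 0 ≤ sSup (S t) := fun t => le_csSup (hbdd t) (h0S t)
  have hmono : ∀ s t, s ≤ t → sSup (S s) ≤ sSup (S t) := by
    intro s t hst
    apply csSup_le_csSup (hbdd t) ⟨0, h0S s⟩
    rintro a (rfl | ⟨ε, hε, u, hu, x, hx, y, hy, hxy, rfl⟩)
    · exact h0S t
    · exact Or.inr ⟨ε, hε, u, hu, x, hx, y, hy, hxy.trans hst, rfl⟩
  have hm0 : sSup (S 0) = 0 := by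
    apply le_antisymm _ (hnn 0)
    apply csSup_le ⟨0, h0S 0⟩
    rintro a (rfl | ⟨ε, hε, u, hu, x, hx, y, hy, hxy, rfl⟩)
    · exact le_rfl
    · have : x = y := by
        rw [← sub_eq_zero, ← norm_eq_zero]
        exact le_antisymm hxy (norm_nonneg _)
      simp [this]
  refine ⟨fun t => sSup (S t), ⟨hnn, fun s _ t _ hst => hmono s t hst, hm0, ?_⟩, ?_⟩
  · rw [Metric.continuousAt_iff]
    intro η hη
    obtain ⟨τ, hτ, h⟩ := heq (η / 2) (by positivity)
    refine ⟨τ, hτ, fun t ht => ?_⟩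
    rw [Real.dist_eq, sub_zero] at ht
    simp only [hm0]
    rw [Real.dist_eq, sub_zero, abs_of_nonneg (hnn t)]
    refine lt_of_le_of_lt (csSup_le ⟨0, h0S t⟩ ?_) (half_lt_self hη)
    rintro a (rfl | ⟨ε, hε, u, hu, x, hx, y, hy, hxy, rfl⟩)
    · positivity
    · have hlt : ‖x - y‖ < τ := hxy.trans_lt ((le_abs_self t).trans_lt ht)
      have h1 := h ε hε u hu x hx y hy hlt
      have h2 := h ε hε u hu y hy x hx (by rwa [norm_sub_rev])
      rw [abs_le]
      constructor <;> linarith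
  · intro ε hε u hu x hx y hy
    exact le_csSup (hbdd _) (Or.inr ⟨ε, hε, u, hu, x, hx, y, hy, le_rfl, rfl⟩)
end
end

section
/- (Comparison principle) Let Ω ⊂ ℝ^N be a nonempty bounded open set, let J : ℝ^N → [0,∞) be integrable and satisfy the exterior mass condition with constant ν₀ > 0, and let f : Ω̄ → ℝ be bounded. Let u, v : ℝ^N → ℝ be bounded measurable functions such that u is upper semicontinuous on Ω̄, v is lower semicontinuous on Ω̄, −I_J[u](x) ≤ f(x) and −I_J[v](x) ≥ f(x) for every x ∈ Ω̄, and u ≤ v on (Ω̄)ᶜ. Then u ≤ v on Ω̄. -/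
open MeasureTheory Metric Set Filter

noncomputable section

/-- The nonlocal operator `I_J[u](x) = ∫ (u(x+z) - u(x)) J(z) dz` associated to an
integrable kernel `J`. -/
def IopJ (N : ℕ) (J u : EuclideanSpace ℝ (Fin N) → ℝ)
    (x : EuclideanSpace ℝ (Fin N)) : ℝ :=
  ∫ z, (u (x + z) - u x) * J z

/-- The exterior mass condition with constant `ν₀`:
`∫_{Ωᶜ - x} J(z) dz ≥ ν₀` for every `x ∈ Ω̄`. -/
def ExtMass (N : ℕ) (Ω : Set (EuclideanSpace ℝ (Fin N)))
    (J : EuclideanSpace ℝ (Fin N) → ℝ) (ν₀ : ℝ) : Prop :=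
  ∀ x ∈ closure Ω, ν₀ ≤ ∫ z in {z | x + z ∉ Ω}, J z

/-- comparison principle. -/
theorem statement5 (N : ℕ) (hN : 1 ≤ N)
    (Ω : Set (EuclideanSpace ℝ (Fin N))) (hΩo : IsOpen Ω) (hΩb : Bornology.IsBounded Ω)
    (hΩne : Ω.Nonempty)
    (J : EuclideanSpace ℝ (Fin N) → ℝ) (hJ0 : ∀ z, 0 ≤ J z) (hJint : Integrable J)
    (ν₀ : ℝ) (hν₀ : 0 < ν₀) (hext : ExtMass N Ω J ν₀)
    (f : EuclideanSpace ℝ (Fin N) → ℝ) (hfb : ∃ C, ∀ x ∈ closure Ω, |f x| ≤ C)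
    (u v : EuclideanSpace ℝ (Fin N) → ℝ)
    (hum : Measurable u) (hub : ∃ C, ∀ x, |u x| ≤ C)
    (hvm : Measurable v) (hvb : ∃ C, ∀ x, |v x| ≤ C)
    (husc : UpperSemicontinuousOn u (closure Ω))
    (hvsc : LowerSemicontinuousOn v (closure Ω))
    (hu : ∀ x ∈ closure Ω, -IopJ N J u x ≤ f x)
    (hv : ∀ x ∈ closure Ω, f x ≤ -IopJ N J v x)
    (huv : ∀ x ∉ closure Ω, u x ≤ v x) :
    ∀ x ∈ closure Ω, u x ≤ v x := by
  classical
  have hcomp : IsCompact (closure Ω) := hΩb.isCompact_closure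
  have hint : ∀ w : EuclideanSpace ℝ (Fin N) → ℝ, Measurable w → (∃ C, ∀ x, |w x| ≤ C) →
      ∀ x, Integrable (fun z => (w (x + z) - w x) * J z) := by
    rintro w hw ⟨C, hC⟩ x
    refine hJint.bdd_mul (c := C + C) ?_ ?_
    · exact ((hw.comp (measurable_const_add x)).sub_const _).aestronglyMeasurable
    · refine Eventually.of_forall fun z => ?_
      rw [Real.norm_eq_abs]
      exact (abs_sub _ _).trans (add_le_add (hC _) (hC _))
  by_contra hcon
  push Not at hcon
  obtain ⟨y, hy, hyw⟩ := hcon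
  have hwsc : UpperSemicontinuousOn (fun x => u x + -v x) (closure Ω) :=
    husc.add hvsc.neg
  obtain ⟨x₀, hx₀, hmax⟩ := hwsc.exists_isMaxOn ⟨y, hy⟩ hcomp
  have hmax' : ∀ x ∈ closure Ω, u x + -v x ≤ u x₀ + -v x₀ := fun x hx => hmax hx
  set M := u x₀ + -v x₀ with hM
  have hMpos : 0 < M := by
    have := hmax' y hy
    linarith
  have hle : ∀ x, u x + -v x ≤ M := by
    intro x
    by_cases hx : x ∈ closure Ω
    · exact hmax' x hx
    · have := huv x hx
      linarith
  have hK := hwsc.isCompact_inter_preimage_Ici hcomp M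
  set K := closure Ω ∩ (fun x => u x + -v x) ⁻¹' Ici M with hKdef
  have hKne : K.Nonempty := ⟨x₀, hx₀, le_refl M⟩
  have key : ∀ x ∈ K, ∀ᵐ z, J z ≠ 0 → x + z ∈ K := by
    rintro x ⟨hx, hxM⟩
    have hxM' : u x + -v x = M := le_antisymm (hle x) hxM
    have h1 := hint u hum hub x
    have h2 := hint v hvm hvb x
    have h3 : 0 ≤ IopJ N J u x - IopJ N J v x := by
      have := hu x hx
      have := hv x hx
      linarith
    unfold IopJ at h3
    rw [← integral_sub h1 h2] at h3
    have hnn : ∀ z, 0 ≤ (v (x + z) - v x) * J z - (u (x + z) - u x) * J z := by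
      intro z
      have e : (v (x + z) - v x) * J z - (u (x + z) - u x) * J z
          = (M - (u (x + z) + -v (x + z))) * J z := by
        rw [← hxM']; ring
      rw [e]
      exact mul_nonneg (sub_nonneg.2 (hle _)) (hJ0 z)
    have h4 : ∫ z, ((v (x + z) - v x) * J z - (u (x + z) - u x) * J z) = 0 := by
      refine le_antisymm ?_ (integral_nonneg hnn)
      rw [integral_sub h2 h1]
      rw [integral_sub h1 h2] at h3
      linarith
    rw [integral_eq_zero_iff_of_nonneg hnn (h2.sub h1)] at h4
    filter_upwards [h4] with z hz hJz
    have e : (M - (u (x + z) + -v (x + z))) * J z = 0 := by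
      simp only [Pi.zero_apply] at hz
      rw [← hxM', ← hz]; ring
    have e2 : M - (u (x + z) + -v (x + z)) = 0 := (mul_eq_zero.1 e).resolve_right hJz
    refine ⟨?_, ?_⟩
    · by_contra hc
      have := huv _ hc
      linarith
    · show M ≤ u (x + z) + -v (x + z)
      linarith
  have hcoord : ∀ᵐ z, ∀ i : Fin N, J z ≠ 0 → z i = 0 := by
    rw [ae_all_iff]
    intro i
    have hc : ContinuousOn (fun x : EuclideanSpace ℝ (Fin N) => x i) K := by fun_prop
    obtain ⟨a, ha, hamax⟩ := hK.exists_isMaxOn hKne hc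
    obtain ⟨b, hb, hbmin⟩ := hK.exists_isMinOn hKne hc
    filter_upwards [key a ha, key b hb] with z hza hzb hJz
    have q1 : (a + z) i ≤ a i := hamax (hza hJz)
    have q2 : b i ≤ (b + z) i := hbmin (hzb hJz)
    simp only [PiLp.add_apply] at q1 q2
    linarith
  haveI : Nonempty (Fin N) := ⟨⟨0, hN⟩⟩
  have hne0 : ∀ᵐ z : EuclideanSpace ℝ (Fin N), z ≠ 0 := by
    rw [ae_iff]
    simp
  have hJzero : J =ᵐ[volume] 0 := by
    filter_upwards [hcoord, hne0] with z hz hz0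
    by_contra hJz
    apply hz0
    ext i
    exact hz i hJz
  have h5 := hext x₀ hx₀
  have h6 : ∫ z in {z | x₀ + z ∉ Ω}, J z = 0 := by
    rw [integral_congr_ae (ae_restrict_of_ae hJzero)]
    simp
  linarith
end
end

section
/- Let Ω ⊂ ℝ^N be a bounded open set, J : ℝ^N → [0,∞) integrable, f ∈ C(Ω̄), and let u : ℝ^N → ℝ be a bounded measurable function satisfying −I_J[u](x) ≤ f(x) for every x ∈ Ω. Let x₀ ∈ ∂Ω and suppose there exists a sequence (x_k) ⊂ Ω such that x_k → x₀, u(x_k) → u(x₀), and limsup_{k→∞} u(x_k + z) ≤ u(x₀ + z) for almost every z ∈ ℝ^N. Then −I_J[u](x₀) ≤ f(x₀). -/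
open MeasureTheory Metric Set Filter

noncomputable section

/-- the subsolution inequality extends to boundary points along
suitable sequences. -/
theorem statement7 (N : ℕ) (hN : 1 ≤ N)
    (Ω : Set (EuclideanSpace ℝ (Fin N))) (hΩo : IsOpen Ω) (hΩb : Bornology.IsBounded Ω)
    (J : EuclideanSpace ℝ (Fin N) → ℝ) (hJ0 : ∀ z, 0 ≤ J z) (hJint : Integrable J)
    (f : EuclideanSpace ℝ (Fin N) → ℝ) (hf : ContinuousOn f (closure Ω))
    (u : EuclideanSpace ℝ (Fin N) → ℝ)
    (hum : Measurable u) (hub : ∃ C, ∀ x, |u x| ≤ C)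
    (hu : ∀ x ∈ Ω, -IopJ N J u x ≤ f x)
    (x₀ : EuclideanSpace ℝ (Fin N)) (hx₀ : x₀ ∈ frontier Ω)
    (xk : ℕ → EuclideanSpace ℝ (Fin N)) (hxk : ∀ k, xk k ∈ Ω)
    (hxkconv : Filter.Tendsto xk Filter.atTop (nhds x₀))
    (huconv : Filter.Tendsto (fun k => u (xk k)) Filter.atTop (nhds (u x₀)))
    (hlimsup : ∀ᵐ z : EuclideanSpace ℝ (Fin N),
      Filter.limsup (fun k => u (xk k + z)) Filter.atTop ≤ u (x₀ + z)) :
    -IopJ N J u x₀ ≤ f x₀ := by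
  obtain ⟨C, hC⟩ := hub
  have hlim : Tendsto (fun k => ∫ z, (max (u (xk k + z)) (u (x₀ + z)) - u (xk k)) * J z) atTop
      (nhds (∫ z, (u (x₀ + z) - u x₀) * J z)) := by
    refine tendsto_integral_of_dominated_convergence (fun z => (C + C) * J z) ?_
      (hJint.const_mul _) ?_ ?_
    · intro k
      refine AEStronglyMeasurable.mul ?_ hJint.aestronglyMeasurable
      exact Measurable.aestronglyMeasurable (by fun_prop)
    · intro k
      refine Eventually.of_forall fun z => ?_
      rw [norm_mul, Real.norm_eq_abs, Real.norm_eq_abs, abs_of_nonneg (hJ0 z)]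
      refine mul_le_mul_of_nonneg_right ?_ (hJ0 z)
      have h1 := abs_le.1 (hC (xk k + z))
      have h2 := abs_le.1 (hC (x₀ + z))
      have h3 := abs_le.1 (hC (xk k))
      have h4 := max_le h1.2 h2.2
      have h5 := le_max_left (u (xk k + z)) (u (x₀ + z))
      rw [abs_le]
      constructor <;> linarith
    · filter_upwards [hlimsup] with z hz
      refine Tendsto.mul_const _ (Tendsto.sub ?_ huconv)
      refine tendsto_order.2 ⟨fun a ha => Eventually.of_forall fun k => ?_, fun a ha => ?_⟩
      · exact lt_of_lt_of_le ha (le_max_right _ _)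
      · have hb : IsBoundedUnder (· ≤ ·) atTop (fun k => u (xk k + z)) :=
          isBoundedUnder_of ⟨C, fun k => (abs_le.1 (hC _)).2⟩
        filter_upwards [eventually_lt_of_limsup_lt (lt_of_le_of_lt hz ha) hb] with k hk
        exact max_lt hk ha
  have hfl : Tendsto (fun k => f (xk k)) atTop (nhds (f x₀)) := by
    refine (hf x₀ (frontier_subset_closure hx₀)).tendsto.comp ?_
    exact tendsto_nhdsWithin_iff.2 ⟨hxkconv, Eventually.of_forall fun k => subset_closure (hxk k)⟩
  refine le_of_tendsto_of_tendsto' hlim.neg hfl fun k => le_trans ?_ (hu _ (hxk k))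
  refine neg_le_neg ?_
  have hint : ∀ g : EuclideanSpace ℝ (Fin N) → ℝ, Measurable g → (∀ z, |g z| ≤ C) →
      Integrable (fun z => (g z - u (xk k)) * J z) := by
    intro g hg hgC
    refine hJint.bdd_mul (c := C + C) (Measurable.aestronglyMeasurable (by fun_prop)) ?_
    refine Eventually.of_forall fun z => ?_
    exact (abs_sub _ _).trans (add_le_add (hgC z) (hC _))
  refine integral_mono (hint _ (by fun_prop) fun z => hC _)
    (hint _ (by fun_prop) fun z => ?_) fun z => ?_
  · exact abs_le.2 ⟨(abs_le.1 (hC _)).1.trans (le_max_left _ _),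
      max_le (abs_le.1 (hC _)).2 (abs_le.1 (hC _)).2⟩
  · exact mul_le_mul_of_nonneg_right (sub_le_sub_right (le_max_left _ _) _) (hJ0 z)
end
end

section
/- Let Ω ⊂ ℝ^N be a nonempty bounded open set, let J : ℝ^N → [0,∞) be integrable and satisfy the exterior mass condition with constant ν₀ > 0, and let f ∈ C(Ω̄). Then there exists a unique bounded function u : ℝ^N → ℝ which is continuous on Ω̄, satisfies u = 0 on (Ω̄)ᶜ, and satisfies −I_J[u](x) = f(x) for every x ∈ Ω̄. -/
open MeasureTheory Metric Set Filter

noncomputable section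

theorem aux_integrable {N : ℕ} (J U : EuclideanSpace ℝ (Fin N) → ℝ) (hJ : Integrable J)
    (hU : Measurable U) (C : ℝ) (hC : ∀ x, |U x| ≤ C) (x : EuclideanSpace ℝ (Fin N)) :
    Integrable (fun z => U (x + z) * J z) := by
  refine hJ.bdd_mul (c := C) ?_ ?_
  · exact (hU.comp (measurable_const_add x)).aestronglyMeasurable
  · exact Eventually.of_forall fun z => by simpa using hC (x + z)

theorem aux_cont {N : ℕ} (J U : EuclideanSpace ℝ (Fin N) → ℝ) (hJ : Integrable J)
    (hU : Measurable U) (C : ℝ) (hC : ∀ x, |U x| ≤ C) :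
    Continuous (fun x => ∫ z, U (x + z) * J z) := by
  have hC0 : 0 ≤ C := (abs_nonneg _).trans (hC 0)
  apply continuous_of_uniform_approx_of_continuous
  intro u hu
  obtain ⟨ε, hε, hεu⟩ := Metric.mem_uniformity_dist.1 hu
  obtain ⟨g, hgs, hg, hgc, hgi⟩ :=
    hJ.exists_hasCompactSupport_integral_sub_le (ε := ε / (2 * (C + 1))) (by positivity)
  refine ⟨fun x => ∫ z, U (x + z) * g z, ?_, ?_⟩
  · have hloc : LocallyIntegrable U := by
      have : LocallyIntegrable (fun _ : EuclideanSpace ℝ (Fin N) => C) := continuous_const.locallyIntegrable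
      exact this.mono hU.aestronglyMeasurable
        (Eventually.of_forall fun z => by
          simpa using (hC z).trans (le_abs_self C))
    have hcs : HasCompactSupport (fun z => g (-z)) :=
      hgs.comp_homeomorph (Homeomorph.neg (EuclideanSpace ℝ (Fin N)))
    have := hcs.continuous_convolution_right (ContinuousLinearMap.mul ℝ ℝ) hloc
      (hgc.comp continuous_neg)
    convert this using 2 with x
    simp only [convolution, ContinuousLinearMap.mul_apply']
    rw [← integral_add_left_eq_self (fun t => U t * g (-(x - t))) x]
    simp
  · intro x
    apply hεu
    rw [Real.dist_eq, ← integral_sub (aux_integrable J U hJ hU C hC x)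
      (aux_integrable g U hgi hU C hC x)]
    have h1 : |∫ z, (U (x + z) * J z - U (x + z) * g z)| ≤ ∫ z, C * ‖J z - g z‖ := by
      rw [← Real.norm_eq_abs]
      apply norm_integral_le_of_norm_le ((hJ.sub hgi).norm.const_mul C)
      refine Eventually.of_forall fun z => ?_
      simp only [Pi.sub_apply]
      rw [← mul_sub, norm_mul]
      exact mul_le_mul_of_nonneg_right (hC _) (norm_nonneg _)
    rw [integral_const_mul] at h1
    refine h1.trans_lt ?_
    calc C * ∫ z, ‖J z - g z‖ ≤ C * (ε / (2 * (C + 1))) := by gcongr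
      _ < ε := by
        rw [mul_div_assoc', div_lt_iff₀ (by positivity)]
        nlinarith

theorem aux_dir {N : ℕ} (hN : 1 ≤ N) (J : EuclideanSpace ℝ (Fin N) → ℝ) (hJ0 : ∀ z, 0 ≤ J z)
    (hJ : Integrable J) (hM : 0 < ∫ z, J z) :
    ∃ (e : EuclideanSpace ℝ (Fin N)) (a : ℝ), 0 < a ∧
      0 < ∫ z in {z | a ≤ inner ℝ e z}, J z := by
  by_contra hcon
  push Not at hcon
  have key : ∀ e : EuclideanSpace ℝ (Fin N), ∀ᵐ z, 0 < inner ℝ e z → J z = 0 := by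
    intro e
    have h1 : ∀ n : ℕ, ∀ᵐ z, (1 / ((n : ℝ) + 1)) ≤ inner ℝ e z → J z = 0 := by
      intro n
      have hms : MeasurableSet {z : EuclideanSpace ℝ (Fin N) | (1 / ((n : ℝ) + 1)) ≤ inner ℝ e z} :=
        (isClosed_le continuous_const (by fun_prop)).measurableSet
      have h2 := hcon e (1 / ((n : ℝ) + 1)) (by positivity)
      have h3 := le_antisymm h2 (setIntegral_nonneg hms fun z _ => hJ0 z)
      rw [setIntegral_eq_zero_iff_of_nonneg_ae (Eventually.of_forall hJ0) hJ.integrableOn] at h3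
      exact (ae_restrict_iff' hms).1 h3
    filter_upwards [ae_all_iff.2 h1] with z hz hpos
    obtain ⟨n, hn⟩ := exists_nat_one_div_lt hpos
    exact hz n hn.le
  have : Nonempty (Fin N) := ⟨⟨0, hN⟩⟩
  have h0 : ∀ᵐ z : EuclideanSpace ℝ (Fin N), z ≠ 0 := by
    rw [ae_iff]
    simp
  have : ∀ᵐ z, J z = 0 := by
    filter_upwards [h0, ae_all_iff.2 fun i : Fin N => key (EuclideanSpace.single i 1),
      ae_all_iff.2 fun i : Fin N => key (EuclideanSpace.single i (-1))] with z hz h1 h2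
    by_contra hJz
    apply hz
    ext i
    have a1 := h1 i
    have a2 := h2 i
    simp [EuclideanSpace.inner_single_left] at a1 a2
    simp only [hJz, imp_false, not_lt] at a1 a2
    simpa using le_antisymm a1 a2
  rw [integral_eq_zero_of_ae this] at hM
  exact lt_irrefl _ hM

theorem aux_weight {N : ℕ} (hN : 1 ≤ N) (J : EuclideanSpace ℝ (Fin N) → ℝ) (hJ0 : ∀ z, 0 ≤ J z)
    (hJ : Integrable J) (hM : 0 < ∫ z, J z) (R : ℝ) (hR : 0 ≤ R) :
    ∃ (W : EuclideanSpace ℝ (Fin N) → ℝ) (θ C : ℝ), Continuous W ∧ 0 ≤ θ ∧ θ < 1 ∧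
      (∀ x, 0 ≤ W x) ∧ (∀ x, W x ≤ C) ∧
      ∀ x, ‖x‖ ≤ R → 0 < W x ∧ ∫ z, W (x + z) * J z ≤ θ * (∫ z, J z) * W x := by
  obtain ⟨e, a, ha, hm⟩ := aux_dir hN J hJ0 hJ hM
  set m := ∫ z in {z | a ≤ inner ℝ e z}, J z with hmdef
  set M := ∫ z, J z with hMdef
  obtain ⟨l, hl0, hl⟩ : ∃ l : ℝ, 0 < l ∧ 2 * M ≤ Real.exp (l * a) * m := by
    refine ⟨(2 * M / m) / a, by positivity, ?_⟩
    rw [div_mul_cancel₀ _ ha.ne', ← div_le_iff₀ hm]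
    linarith [Real.add_one_le_exp (2 * M / m)]
  set P := Real.exp (l * (‖e‖ * R + a)) with hP
  have hP0 : 0 < P := Real.exp_pos _
  set g : EuclideanSpace ℝ (Fin N) → ℝ := fun x => min (Real.exp (l * inner ℝ e x)) P with hg
  have hgc : Continuous g := by fun_prop
  have hg0 : ∀ x, 0 < g x := fun x => lt_min (Real.exp_pos _) hP0
  have hgP : ∀ x, g x ≤ P := fun x => min_le_right _ _
  set c := Real.exp (-(l * (‖e‖ * R))) with hc
  have hc0 : 0 < c := Real.exp_pos _
  have heR : 0 ≤ ‖e‖ * R := by positivity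
  have hcP : c ≤ P := by
    apply Real.exp_le_exp.2
    nlinarith [mul_nonneg hl0.le heR, mul_pos hl0 ha]
  refine ⟨fun x => P - g x, 1 - c / P, P, by fun_prop, ?_, ?_, ?_, ?_, ?_⟩
  · rw [sub_nonneg, div_le_one hP0]; exact hcP
  · have : 0 < c / P := by positivity
    linarith
  · intro x; linarith [hgP x]
  · intro x; linarith [hg0 x]
  · intro x hx
    have hin := abs_le.1 ((abs_real_inner_le_norm e x).trans
      (mul_le_mul_of_nonneg_left hx (norm_nonneg e)))
    have hlt : Real.exp (l * inner ℝ e x) < P := by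
      apply Real.exp_lt_exp.2
      apply mul_lt_mul_of_pos_left _ hl0
      linarith [hin.2]
    have hgx : g x = Real.exp (l * inner ℝ e x) := min_eq_left hlt.le
    have hcg : c ≤ g x := by
      rw [hgx]
      apply Real.exp_le_exp.2
      nlinarith [hin.1]
    refine ⟨by simp only [hgx]; linarith, ?_⟩
    have hgi : Integrable (fun z => g (x + z) * J z) :=
      aux_integrable J g hJ hgc.measurable P
        (fun y => by rw [abs_of_pos (hg0 y)]; exact hgP y) x
    have hms : MeasurableSet {z : EuclideanSpace ℝ (Fin N) | a ≤ inner ℝ e z} :=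
      (isClosed_le continuous_const (by fun_prop)).measurableSet
    have h1 : g x * (2 * M) ≤ ∫ z, g (x + z) * J z := by
      calc g x * (2 * M) ≤ g x * (Real.exp (l * a) * m) := by
            exact mul_le_mul_of_nonneg_left hl (hg0 x).le
        _ = ∫ z in {z | a ≤ inner ℝ e z}, (g x * Real.exp (l * a)) * J z := by
            rw [integral_const_mul, mul_assoc]
        _ ≤ ∫ z in {z | a ≤ inner ℝ e z}, g (x + z) * J z := by
            apply setIntegral_mono_on (hJ.integrableOn.const_mul _) hgi.integrableOn hms
            intro z hz
            apply mul_le_mul_of_nonneg_right _ (hJ0 z)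
            rw [hgx, ← Real.exp_add]
            apply le_min
            · apply Real.exp_le_exp.2
              rw [inner_add_right]
              have : a ≤ inner ℝ e z := hz
              nlinarith
            · apply Real.exp_le_exp.2
              nlinarith [hin.2]
        _ ≤ ∫ z, g (x + z) * J z :=
            setIntegral_le_integral hgi
              (Eventually.of_forall fun z => mul_nonneg (hg0 _).le (hJ0 z))
    have h2 : ∫ z, (P - g (x + z)) * J z = P * M - ∫ z, g (x + z) * J z := by
      simp only [sub_mul]
      rw [integral_sub (hJ.const_mul P) hgi, integral_const_mul]
    rw [h2]
    have h3 : c / P * (P - g x) ≤ c := by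
      rw [div_mul_eq_mul_div, div_le_iff₀ hP0]
      nlinarith [hg0 x]
    nlinarith [mul_le_mul_of_nonneg_left h3 hM.le, mul_le_mul_of_nonneg_left hcg hM.le]

/-- existence and uniqueness of a bounded solution, continuous on `Ω̄`,
vanishing outside `Ω̄`, of `-I_J[u] = f` on `Ω̄`. -/
theorem statement8 (N : ℕ) (hN : 1 ≤ N)
    (Ω : Set (EuclideanSpace ℝ (Fin N))) (hΩo : IsOpen Ω) (hΩb : Bornology.IsBounded Ω)
    (hΩne : Ω.Nonempty)
    (J : EuclideanSpace ℝ (Fin N) → ℝ) (hJ0 : ∀ z, 0 ≤ J z) (hJint : Integrable J)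
    (ν₀ : ℝ) (hν₀ : 0 < ν₀) (hext : ExtMass N Ω J ν₀)
    (f : EuclideanSpace ℝ (Fin N) → ℝ) (hf : ContinuousOn f (closure Ω)) :
    ∃! u : EuclideanSpace ℝ (Fin N) → ℝ,
      (∃ C, ∀ x, |u x| ≤ C) ∧ ContinuousOn u (closure Ω) ∧
        (∀ x, x ∉ closure Ω → u x = 0) ∧ ∀ x ∈ closure Ω, -IopJ N J u x = f x := by
  have hM : 0 < ∫ z, J z := by
    obtain ⟨x, hx⟩ := hΩne
    exact hν₀.trans_le ((hext x (subset_closure hx)).trans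
      (setIntegral_le_integral hJint (Eventually.of_forall hJ0)))
  obtain ⟨R, hR0, hR⟩ : ∃ R : ℝ, 0 ≤ R ∧ ∀ x ∈ closure Ω, ‖x‖ ≤ R := by
    obtain ⟨R, hR⟩ := hΩb.closure.exists_norm_le
    exact ⟨max R 0, le_max_right _ _, fun x hx => (hR x hx).trans (le_max_left _ _)⟩
  obtain ⟨W, θ, P, hWc, hθ0, hθ1, hW0, hWP, hW⟩ := aux_weight hN J hJ0 hJint hM R hR0
  set M := ∫ z, J z with hMdef
  set K := closure Ω with hK
  have hKc : IsCompact K := hΩb.isCompact_closure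
  have hKm : MeasurableSet K := hKc.measurableSet
  have : CompactSpace K := isCompact_iff_compactSpace.1 hKc
  have hWpos : ∀ x : K, 0 < W x := fun x => (hW x (hR x x.2)).1
  have hP0 : 0 ≤ P := (hW0 0).trans (hWP 0)
  let U : C(K, ℝ) → EuclideanSpace ℝ (Fin N) → ℝ := fun v x =>
    Function.extend Subtype.val v 0 x * W x
  have hUin : ∀ v (x : K), U v x = v x * W x := fun v x => by
    simp only [U]
    rw [Subtype.val_injective.extend_apply]
  have hUout : ∀ v x, x ∉ K → U v x = 0 := fun v x hx => by
    simp only [U]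
    rw [Function.extend_apply']
    · simp
    · rintro ⟨y, rfl⟩; exact hx y.2
  have hUm : ∀ v, Measurable (U v) := fun v =>
    ((MeasurableEmbedding.subtype_coe hKm).measurable_extend v.continuous.measurable
      measurable_zero).mul hWc.measurable
  have hUd : ∀ v w x, |U v x - U w x| ≤ dist v w * W x := fun v w x => by
    by_cases hx : x ∈ K
    · have e1 := hUin v ⟨x, hx⟩
      have e2 := hUin w ⟨x, hx⟩
      simp only at e1 e2
      rw [e1, e2, ← sub_mul, abs_mul, abs_of_nonneg (hW0 x), ← Real.dist_eq]
      exact mul_le_mul_of_nonneg_right (ContinuousMap.dist_apply_le_dist _) (hW0 x)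
    · rw [hUout v x hx, hUout w x hx]
      simpa using mul_nonneg dist_nonneg (hW0 x)
  have hUb : ∀ v x, |U v x| ≤ ‖v‖ * P := fun v x => by
    by_cases hx : x ∈ K
    · have e1 := hUin v ⟨x, hx⟩
      simp only at e1
      rw [e1, abs_mul, abs_of_nonneg (hW0 x)]
      exact mul_le_mul (v.norm_coe_le_norm _) (hWP x) (hW0 x) (norm_nonneg _)
    · rw [hUout v x hx]
      simpa using mul_nonneg (norm_nonneg v) hP0
  have hUi : ∀ v x, Integrable (fun z => U v (x + z) * J z) := fun v x =>
    aux_integrable J (U v) hJint (hUm v) _ (hUb v) x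
  have hfc : Continuous (fun x : K => f x) := continuousOn_iff_continuous_domRestrict.1 hf
  let S : C(K, ℝ) → C(K, ℝ) := fun v =>
    ⟨fun x => ((∫ z, U v (x + z) * J z) + f x) / (M * W x), by
      refine Continuous.div ?_ ?_ ?_
      · exact ((aux_cont J (U v) hJint (hUm v) _ (hUb v)).comp continuous_subtype_val).add hfc
      · exact continuous_const.mul (hWc.comp continuous_subtype_val)
      · intro x; exact (mul_pos hM (hWpos x)).ne'⟩
  have hSapp : ∀ v (x : K), S v x = ((∫ z, U v (x + z) * J z) + f x) / (M * W x) :=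
    fun v x => rfl
  have hWi : ∀ x, Integrable (fun z => W (x + z) * J z) := fun x =>
    aux_integrable J W hJint hWc.measurable P
      (fun y => by rw [abs_of_nonneg (hW0 y)]; exact hWP y) x
  have hcontr : ContractingWith ⟨θ, hθ0⟩ S := by
    refine ⟨by exact_mod_cast hθ1, LipschitzWith.of_dist_le_mul fun v w => ?_⟩
    change dist (S v) (S w) ≤ θ * dist v w
    rw [ContinuousMap.dist_le (mul_nonneg hθ0 dist_nonneg)]
    intro x
    have hMW := mul_pos hM (hWpos x)
    rw [Real.dist_eq, hSapp, hSapp, ← sub_div, add_sub_add_right_eq_sub, abs_div,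
      abs_of_pos hMW, div_le_iff₀ hMW, ← integral_sub (hUi v x) (hUi w x)]
    have h1 : |∫ z, (U v (x + z) * J z - U w (x + z) * J z)|
        ≤ ∫ z, dist v w * (W (x + z) * J z) := by
      rw [← Real.norm_eq_abs]
      apply norm_integral_le_of_norm_le ((hWi x).const_mul _)
      refine Eventually.of_forall fun z => ?_
      rw [← sub_mul, Real.norm_eq_abs, abs_mul, abs_of_nonneg (hJ0 z), ← mul_assoc]
      exact mul_le_mul_of_nonneg_right (hUd v w _) (hJ0 z)
    rw [integral_const_mul] at h1
    have h2 := mul_le_mul_of_nonneg_left (hW x (hR x x.2)).2 (dist_nonneg (x := v) (y := w))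
    calc _ ≤ _ := h1
      _ ≤ _ := h2
      _ = _ := by ring
  have hI : ∀ v (x : K), IopJ N J (U v) x = (∫ z, U v (x + z) * J z) - v x * W x * M := by
    intro v x
    simp only [IopJ, sub_mul]
    rw [integral_sub (hUi v x) (hJint.const_mul _), integral_const_mul, hUin]
  have hiff : ∀ v, (∀ x ∈ K, -IopJ N J (U v) x = f x) ↔ S v = v := by
    intro v
    constructor
    · intro h
      ext x
      have := h x x.2
      rw [hI] at this
      rw [hSapp, div_eq_iff (mul_pos hM (hWpos x)).ne']
      linarith
    · intro h x hx
      have e := hSapp v ⟨x, hx⟩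
      rw [h, eq_div_iff (mul_pos hM (hWpos ⟨x, hx⟩)).ne'] at e
      have := hI v ⟨x, hx⟩
      simp only at this e
      rw [this]
      linarith
  have : Nonempty C(K, ℝ) := ⟨0⟩
  set v₀ := ContractingWith.fixedPoint S hcontr with hv₀
  have hfix : S v₀ = v₀ := hcontr.fixedPoint_isFixedPt
  refine ⟨U v₀, ⟨⟨_, hUb v₀⟩, ?_, hUout v₀, (hiff v₀).2 hfix⟩, ?_⟩
  · rw [continuousOn_iff_continuous_domRestrict]
    have : K.domRestrict (U v₀) = fun x : K => v₀ x * W x := by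
      ext x; exact hUin v₀ x
    rw [this]
    exact v₀.continuous.mul (hWc.comp continuous_subtype_val)
  · rintro u ⟨-, huc, hu0, hu⟩
    let v : C(K, ℝ) := ⟨fun x => u x / W x, by
      refine Continuous.div (continuousOn_iff_continuous_domRestrict.1 huc)
        (hWc.comp continuous_subtype_val) fun x => (hWpos x).ne'⟩
    have huv : U v = u := by
      ext x
      by_cases hx : x ∈ K
      · have e := hUin v ⟨x, hx⟩
        simp only at e
        rw [e]
        exact div_mul_cancel₀ _ (hWpos ⟨x, hx⟩).ne'
      · rw [hUout v x hx, hu0 x hx]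
    have hv : S v = v := (hiff v).1 (by rw [huv]; exact hu)
    have : v = v₀ := hcontr.fixedPoint_unique hv
    rw [← huv, this]
end
end

section
/- Let Ω ⊂ ℝ^N be a nonempty bounded open set, let J : ℝ^N → [0,∞) be integrable and satisfy the exterior mass condition with constant ν₀ > 0, and let f ∈ C(Ω̄). For a > 0 define the map T_a on continuous functions u : Ω̄ → ℝ by T_a(u)(x) = u(x) − a( ‖J‖_{L¹(ℝ^N)} u(x) − ∫_Ω u(w) J(w − x) dw − f(x) ) for x ∈ Ω̄. Then for every a with 0 < a < min{ν₀^{−1}, ‖J‖_{L¹(ℝ^N)}^{−1}} and all continuous u₁, u₂ : Ω̄ → ℝ, sup_{x ∈ Ω̄} |T_a(u₁)(x) − T_a(u₂)(x)| ≤ (1 − a ν₀) sup_{x ∈ Ω̄} |u₁(x) − u₂(x)|; in particular T_a is a contraction on C(Ω̄). -/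
open MeasureTheory Metric Set Filter

noncomputable section

/-- the fixed point map `T_a` is a contraction on `C(Ω̄)`. -/
theorem statement9 (N : ℕ) (hN : 1 ≤ N)
    (Ω : Set (EuclideanSpace ℝ (Fin N))) (hΩo : IsOpen Ω) (hΩb : Bornology.IsBounded Ω)
    (hΩne : Ω.Nonempty)
    (J : EuclideanSpace ℝ (Fin N) → ℝ) (hJ0 : ∀ z, 0 ≤ J z) (hJint : Integrable J)
    (ν₀ : ℝ) (hν₀ : 0 < ν₀) (hext : ExtMass N Ω J ν₀)
    (f : EuclideanSpace ℝ (Fin N) → ℝ) (hf : ContinuousOn f (closure Ω))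
    (a : ℝ) (ha : 0 < a) (ha' : a < min ν₀⁻¹ (∫ z, J z)⁻¹)
    (u₁ u₂ : EuclideanSpace ℝ (Fin N) → ℝ)
    (hu₁ : ContinuousOn u₁ (closure Ω)) (hu₂ : ContinuousOn u₂ (closure Ω)) :
    ∀ x ∈ closure Ω,
      |(u₁ x - a * ((∫ z, J z) * u₁ x - (∫ w in Ω, u₁ w * J (w - x)) - f x)) -
          (u₂ x - a * ((∫ z, J z) * u₂ x - (∫ w in Ω, u₂ w * J (w - x)) - f x))| ≤
        (1 - a * ν₀) * sSup ((fun y => |u₁ y - u₂ y|) '' closure Ω) := by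
  intro x hx
  have hc : IsCompact (closure Ω) := hΩb.isCompact_closure
  have hv : ContinuousOn (fun y => |u₁ y - u₂ y|) (closure Ω) := (hu₁.sub hu₂).abs
  have hbdd : BddAbove ((fun y => |u₁ y - u₂ y|) '' closure Ω) := (hc.image_of_continuousOn hv).bddAbove
  set M := sSup ((fun y => |u₁ y - u₂ y|) '' closure Ω) with hM
  have hle : ∀ y ∈ closure Ω, |u₁ y - u₂ y| ≤ M := fun y hy => le_csSup hbdd ⟨y, hy, rfl⟩
  have hM0 : 0 ≤ M := (abs_nonneg _).trans (hle x hx)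
  have hJx : Integrable (fun w => J (w - x)) := hJint.comp_sub_right x
  have hint : ∀ u : EuclideanSpace ℝ (Fin N) → ℝ, ContinuousOn u (closure Ω) →
      IntegrableOn (fun w => u w * J (w - x)) Ω := by
    intro u hu
    obtain ⟨C, hC⟩ := hc.exists_bound_of_continuousOn hu
    refine Integrable.bdd_mul (c := C) hJx.integrableOn ?_ ?_
    · exact (hu.mono subset_closure).aestronglyMeasurable hΩo.measurableSet
    · exact (ae_restrict_iff' hΩo.measurableSet).2
        (Eventually.of_forall fun w hw => hC w (subset_closure hw))
  have hsplit : (∫ w in Ω, J (w - x)) + ∫ z in {z | x + z ∉ Ω}, J z = ∫ z, J z := by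
    have h1 : ∫ z in {z | x + z ∉ Ω}, J z = ∫ w in Ωᶜ, J (w - x) := by
      have := (measurePreserving_add_left volume x).setIntegral_preimage_emb
        (measurableEmbedding_addLeft x) (fun w => J (w - x)) Ωᶜ
      simpa [Set.preimage, Set.mem_compl_iff, Set.compl_def] using this
    rw [h1, integral_add_compl hΩo.measurableSet hJx, integral_sub_right_eq_self J x]
  have hK := hext x hx
  have hdiff : |(∫ w in Ω, u₁ w * J (w - x)) - ∫ w in Ω, u₂ w * J (w - x)|
      ≤ M * ∫ w in Ω, J (w - x) := by
    rw [← integral_sub (hint u₁ hu₁) (hint u₂ hu₂), ← integral_const_mul, ← Real.norm_eq_abs]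
    refine norm_integral_le_of_norm_le (hJx.integrableOn.const_mul M) ?_
    refine (ae_restrict_iff' hΩo.measurableSet).2 (Eventually.of_forall fun w hw => ?_)
    rw [← sub_mul, norm_mul, Real.norm_eq_abs, Real.norm_eq_abs, abs_of_nonneg (hJ0 _)]
    exact mul_le_mul_of_nonneg_right (hle w (subset_closure hw)) (hJ0 _)
  have haL : 0 ≤ 1 - a * ∫ z, J z := by
    have h1 : a < (∫ z, J z)⁻¹ := ha'.trans_le (min_le_right _ _)
    have hL : 0 < ∫ z, J z := inv_pos.1 (ha.trans h1)
    have := mul_lt_mul_of_pos_right h1 hL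
    rw [inv_mul_cancel₀ hL.ne'] at this
    linarith
  have hvx := hle x hx
  generalize (∫ z, J z) = L at *
  generalize (∫ w in Ω, u₁ w * J (w - x)) = A at *
  generalize (∫ w in Ω, u₂ w * J (w - x)) = B at *
  generalize (∫ w in Ω, J (w - x)) = K at *
  generalize (∫ z in {z | x + z ∉ Ω}, J z) = E at *
  have e : (u₁ x - a * (L * u₁ x - A - f x)) - (u₂ x - a * (L * u₂ x - B - f x))
      = (1 - a * L) * (u₁ x - u₂ x) + a * (A - B) := by ring
  rw [e]
  calc _ ≤ |(1 - a * L) * (u₁ x - u₂ x)| + |a * (A - B)| := abs_add_le _ _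
    _ = (1 - a * L) * |u₁ x - u₂ x| + a * |A - B| := by
      rw [abs_mul, abs_mul, abs_of_nonneg haL, abs_of_pos ha]
    _ ≤ (1 - a * L) * M + a * (M * K) := by gcongr
    _ ≤ (1 - a * L) * M + a * (M * (L - ν₀)) := by
      gcongr
      linarith
    _ = _ := by ring
end
end

section
/- Let Ω ⊂ ℝ^N be a nonempty bounded open set, let J : ℝ^N → [0,∞) be integrable and satisfy the exterior mass condition with constant ν₀ > 0, and let f ∈ C(Ω̄) satisfy f(x) ≥ ϱ₀ for all x ∈ Ω̄, for some ϱ₀ > 0. Then there is no bounded continuous function u : ℝ^N → ℝ with u = 0 on Ωᶜ satisfying −I_J[u](x) = f(x) for every x ∈ Ω. (In other words, any solution of the homogeneous Dirichlet problem for such f must be discontinuous at some point of ∂Ω.) -/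
open MeasureTheory Metric Set Filter

noncomputable section

/-- for a strictly positive right-hand side there is no bounded
continuous (on all of `ℝ^N`) solution of the homogeneous Dirichlet problem. -/
theorem statement10 (N : ℕ) (hN : 1 ≤ N)
    (Ω : Set (EuclideanSpace ℝ (Fin N))) (hΩo : IsOpen Ω) (hΩb : Bornology.IsBounded Ω)
    (hΩne : Ω.Nonempty)
    (J : EuclideanSpace ℝ (Fin N) → ℝ) (hJ0 : ∀ z, 0 ≤ J z) (hJint : Integrable J)
    (ν₀ : ℝ) (hν₀ : 0 < ν₀) (hext : ExtMass N Ω J ν₀)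
    (f : EuclideanSpace ℝ (Fin N) → ℝ) (hf : ContinuousOn f (closure Ω))
    (ϱ₀ : ℝ) (hϱ₀ : 0 < ϱ₀) (hfpos : ∀ x ∈ closure Ω, ϱ₀ ≤ f x) :
    ¬ ∃ u : EuclideanSpace ℝ (Fin N) → ℝ,
        (∃ C, ∀ x, |u x| ≤ C) ∧ Continuous u ∧
          (∀ x, x ∉ Ω → u x = 0) ∧ ∀ x ∈ Ω, -IopJ N J u x = f x := by
  rintro ⟨u, ⟨C, hC⟩, hu, hu0, heq⟩
  have hIc : Continuous (IopJ N J u) := by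
    unfold IopJ
    refine continuous_of_dominated (bound := fun z => (2 * C) * J z) ?_ ?_ ?_ ?_
    · intro x
      exact (Continuous.aestronglyMeasurable (by fun_prop)).mul hJint.aestronglyMeasurable
    · intro x
      refine Eventually.of_forall fun z => ?_
      rw [norm_mul, Real.norm_eq_abs, Real.norm_eq_abs, abs_of_nonneg (hJ0 z)]
      refine mul_le_mul_of_nonneg_right ?_ (hJ0 z)
      have h1 := abs_le.1 (hC (x + z))
      have h2 := abs_le.1 (hC x)
      exact abs_le.2 ⟨by linarith, by linarith⟩
    · exact hJint.const_mul _
    · refine Eventually.of_forall fun z => ?_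
      fun_prop
  have hle : ∀ x ∈ closure Ω, ϱ₀ ≤ -IopJ N J u x := by
    have hcl : IsClosed {x | ϱ₀ ≤ -IopJ N J u x} := isClosed_le continuous_const hIc.neg
    have hsub : Ω ⊆ {x | ϱ₀ ≤ -IopJ N J u x} := by
      intro x hx
      simp only [mem_setOf_eq]
      rw [heq x hx]
      exact hfpos x (subset_closure hx)
    exact fun x hx => closure_minimal hsub hcl hx
  -- no point of the closure is a global minimum
  have hkey : ∀ x ∈ closure Ω, ¬ ∀ y, u x ≤ u y := by
    intro x hx h
    have h1 := hle x hx
    have h2 : 0 ≤ IopJ N J u x :=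
      integral_nonneg fun z => mul_nonneg (sub_nonneg.2 (h (x + z))) (hJ0 z)
    linarith
  obtain ⟨x0, hx0, hmin⟩ := hΩb.isCompact_closure.exists_isMinOn hΩne.closure hu.continuousOn
  haveI : Nonempty (Fin N) := ⟨⟨0, hN⟩⟩
  have hne : Ω ≠ univ := by
    rintro rfl
    exact NormedSpace.unbounded_univ ℝ (EuclideanSpace ℝ (Fin N)) hΩb
  obtain ⟨x1, hx1⟩ := (nonempty_frontier_iff (s := Ω)).2 ⟨hΩne, hne⟩
  have hx1c : x1 ∈ closure Ω := hx1.1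
  have hx1n : x1 ∉ Ω := by
    have := hx1.2
    rwa [hΩo.interior_eq] at this
  refine hkey x0 hx0 fun y => ?_
  by_cases hy : y ∈ Ω
  · exact hmin (subset_closure hy)
  · rw [hu0 y hy, ← hu0 x1 hx1n]
    exact hmin hx1c
end
end

section
/- Let Ω ⊂ ℝ^N be a nonempty bounded open set and R = diam(Ω). Then for every ε ∈ (0,1) and every x ∈ Ω̄, ∫_{Ωᶜ − x} K_ε(z) dz ≥ N·Vol(B₁)·(R + 1)^{−2σ}/(4σ), where Vol(B₁) is the Lebesgue measure of the unit ball of ℝ^N. In particular, the indicator function χ = 1_{Ω̄} satisfies −I_ε[χ](x) ≥ N·Vol(B₁)·(R + 1)^{−2σ}/(4σ) for every x ∈ Ω̄ and every ε ∈ (0,1). -/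
open MeasureTheory Metric Set Filter

noncomputable section

lemma Kker_nonneg' (N : ℕ) (σ ε : ℝ) (hε : 0 < ε) (z : EuclideanSpace ℝ (Fin N)) :
    0 ≤ Kker N σ ε z := by
  unfold Kker
  positivity

lemma Kker_integrable (N : ℕ) (σ ε : ℝ) (hσ : 0 < σ) (hε : 0 < ε) (hε1 : ε < 1) :
    Integrable (Kker N σ ε) := by
  have hp : 0 < (N : ℝ) + 2 * σ := by positivity
  have h1 : Integrable (fun z : EuclideanSpace ℝ (Fin N) =>
      (2 / ε) ^ ((N : ℝ) + 2 * σ) * (1 + ‖z‖) ^ (-((N : ℝ) + 2 * σ))) := by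
    refine (integrable_one_add_norm ?_).const_mul _
    simp
    exact hσ
  refine h1.mono' ?_ ?_
  · refine Measurable.aestronglyMeasurable ?_
    unfold Kker
    fun_prop
  · refine Filter.Eventually.of_forall fun z => ?_
    rw [Real.norm_of_nonneg (Kker_nonneg' N σ ε hε z)]
    unfold Kker
    have hy : 0 ≤ ‖z‖ := norm_nonneg z
    generalize ‖z‖ = y at *
    generalize (N : ℝ) + 2 * σ = p at *
    rw [Real.rpow_neg (by positivity), ← div_eq_mul_inv, div_le_div_iff₀ (by positivity) (by positivity),
      one_mul]
    have ha : 0 ≤ ε ^ p := by positivity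
    have hb : 0 ≤ y ^ p := by positivity
    have hc : 0 ≤ (2 / ε) ^ p := by positivity
    rcases le_total y ε with h | h
    · have : (1 + y) ^ p ≤ (2 / ε * ε) ^ p := by
        apply Real.rpow_le_rpow (by positivity) _ hp.le
        rw [div_mul_cancel₀ _ hε.ne']; linarith
      rw [Real.mul_rpow (by positivity) hε.le] at this
      nlinarith [mul_nonneg hc hb]
    · have : (1 + y) ^ p ≤ (2 / ε * y) ^ p := by
        apply Real.rpow_le_rpow (by positivity) _ hp.le
        rw [div_mul_eq_mul_div, le_div_iff₀ hε]
        nlinarith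
      rw [Real.mul_rpow (by positivity) hy] at this
      nlinarith [mul_nonneg hc ha]

lemma tail_integral (N : ℕ) (hN : 1 ≤ N) (σ r : ℝ) (hσ : 0 < σ) (hr : 0 < r) :
    ∫ z : EuclideanSpace ℝ (Fin N), (Ioi r).indicator
        (fun y : ℝ => (1 / 2) * y ^ (-((N : ℝ) + 2 * σ))) ‖z‖ =
      (N : ℝ) * (volume (Metric.ball (0 : EuclideanSpace ℝ (Fin N)) 1)).toReal *
            r ^ (-(2 * σ)) / (4 * σ) := by
  haveI : Nontrivial (EuclideanSpace ℝ (Fin N)) := by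
    haveI : Nonempty (Fin N) := ⟨⟨0, hN⟩⟩
    infer_instance
  rw [integral_fun_norm_addHaar]
  have h : ∫ y in Ioi (0 : ℝ), y ^ (Module.finrank ℝ (EuclideanSpace ℝ (Fin N)) - 1) •
      (Ioi r).indicator (fun y : ℝ => (1 / 2) * y ^ (-((N : ℝ) + 2 * σ))) y
      = ∫ y in Ioi r, (1 / 2) * y ^ (-(2 * σ) - 1) := by
    rw [← integral_indicator measurableSet_Ioi, ← integral_indicator measurableSet_Ioi]
    congr 1
    ext y
    by_cases hy : r < y
    · have hy0 : 0 < y := hr.trans hy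
      simp only [indicator, mem_Ioi, hy, hy0, if_true, finrank_euclideanSpace_fin, smul_eq_mul]
      rw [← Real.rpow_natCast, mul_left_comm, ← Real.rpow_add hy0, Nat.cast_sub hN]
      congr 2
      push_cast; ring
    · simp [indicator, hy]
  rw [h, integral_const_mul, integral_Ioi_rpow_of_lt (by linarith) hr]
  simp only [finrank_euclideanSpace_fin, smul_eq_mul, nsmul_eq_mul, Measure.real]
  rw [show -(2 * σ) - 1 + 1 = -(2 * σ) by ring]
  field_simp
  try ring

lemma tail_bound (N : ℕ) (hN : 1 ≤ N) (σ ε r : ℝ) (hσ : 0 < σ) (hε : 0 < ε) (hε1 : ε < 1)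
    (hr : 1 ≤ r) (S : Set (EuclideanSpace ℝ (Fin N))) (hS : MeasurableSet S)
    (hsub : ∀ z, r < ‖z‖ → z ∈ S) :
    (N : ℝ) * (volume (Metric.ball (0 : EuclideanSpace ℝ (Fin N)) 1)).toReal *
            r ^ (-(2 * σ)) / (4 * σ) ≤ ∫ z in S, Kker N σ ε z := by
  rw [← tail_integral N hN σ r hσ (by linarith), ← integral_indicator hS]
  refine integral_mono_of_nonneg (Filter.Eventually.of_forall fun z => ?_)
    ((Kker_integrable N σ ε hσ hε hε1).indicator hS) (Filter.Eventually.of_forall fun z => ?_)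
  · simp only [Pi.zero_apply]
    refine indicator_nonneg (fun y hy => ?_) _
    have : 0 < y := by linarith [mem_Ioi.1 hy]
    positivity
  · by_cases hz : r < ‖z‖
    · simp only [indicator, mem_Ioi, hz, hsub z hz, if_true, Kker]
      have hz0 : 0 < ‖z‖ := by linarith
      have : ε ^ ((N : ℝ) + 2 * σ) ≤ ‖z‖ ^ ((N : ℝ) + 2 * σ) :=
        Real.rpow_le_rpow hε.le (by linarith) (by positivity)
      rw [Real.rpow_neg hz0.le, ← one_div, one_div_mul_one_div]
      apply one_div_le_one_div_of_le (by positivity)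
      linarith
    · have h0 : (Ioi r).indicator (fun y : ℝ => (1 / 2) * y ^ (-((N : ℝ) + 2 * σ))) ‖z‖ = 0 := by
        simp [indicator, hz]
      simp only [h0]
      exact indicator_nonneg (fun y _ => Kker_nonneg' N σ ε hε y) _

/-- a uniform lower bound for the exterior mass of `K_ε`, and the
resulting supersolution property of the indicator of `Ω̄`. -/
theorem statement14 (N : ℕ) (hN : 1 ≤ N) (σ : ℝ) (hσ : σ ∈ Set.Ioo (0 : ℝ) 1)
    (Ω : Set (EuclideanSpace ℝ (Fin N))) (hΩo : IsOpen Ω) (hΩb : Bornology.IsBounded Ω)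
    (hΩne : Ω.Nonempty) :
    ∀ ε ∈ Set.Ioo (0 : ℝ) 1, ∀ x ∈ closure Ω,
      (N : ℝ) * (volume (Metric.ball (0 : EuclideanSpace ℝ (Fin N)) 1)).toReal *
            (Metric.diam Ω + 1) ^ (-(2 * σ)) / (4 * σ) ≤
          ∫ z in {z | x + z ∉ Ω}, Kker N σ ε z ∧
        (N : ℝ) * (volume (Metric.ball (0 : EuclideanSpace ℝ (Fin N)) 1)).toReal *
            (Metric.diam Ω + 1) ^ (-(2 * σ)) / (4 * σ) ≤
          -Iop N σ ε (Set.indicator (closure Ω) fun _ => (1 : ℝ)) x := by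
  intro ε hε x hx
  have key : ∀ z, Metric.diam Ω + 1 < ‖z‖ → x + z ∉ closure Ω := by
    intro z hz hmem
    have := Metric.dist_le_diam_of_mem hΩb.closure hmem hx
    rw [Metric.diam_closure, dist_eq_norm, add_sub_cancel_left] at this
    linarith
  have hr : 1 ≤ Metric.diam Ω + 1 := by linarith [Metric.diam_nonneg (s := Ω)]
  have hm : Measurable fun z : EuclideanSpace ℝ (Fin N) => x + z := by fun_prop
  refine ⟨tail_bound N hN σ ε _ hσ.1 hε.1 hε.2 hr _ (hm hΩo.measurableSet.compl)
    fun z hz h => key z hz (subset_closure h), ?_⟩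
  have hcl : MeasurableSet {z | x + z ∉ closure Ω} := hm isClosed_closure.measurableSet.compl
  refine (tail_bound N hN σ ε _ hσ.1 hε.1 hε.2 hr _ hcl key).trans_eq ?_
  unfold Iop
  rw [← integral_neg, ← integral_indicator hcl]
  congr 1
  ext z
  by_cases h : x + z ∈ closure Ω <;> simp [indicator, h, hx]
end
end

section
/- Let σ ∈ (0,1), β₀ ∈ (0, min{1, 2σ}) and α ∈ (0, β₀). Then there exists a constant C > 0, depending only on σ, β₀ and α, such that for all ε ∈ (0,1], all r ∈ (0,1] and all d > r, (ε + r)^{β₀} · ∫_{d−r}^{d+r} (ε^{1+2σ} + |s|^{1+2σ})^{−1} ds ≤ C · r^{α} · (ε + d − r)^{−2σ}. -/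
open MeasureTheory Metric Set Filter

noncomputable section

lemma aux_pt (σ ε s : ℝ) (hσ : 0 < σ) (hε : 0 < ε) (hs : 0 < s) :
    (ε ^ (1 + 2 * σ) + |s| ^ (1 + 2 * σ))⁻¹ ≤ 2 ^ (1 + 2 * σ) * (ε + s) ^ (-(1 + 2 * σ)) := by
  have hp : 0 ≤ 1 + 2 * σ := by linarith
  rw [abs_of_pos hs, Real.rpow_neg (by linarith)]
  have h1 : (ε + s) ^ (1 + 2 * σ) ≤ 2 ^ (1 + 2 * σ) * (ε ^ (1 + 2 * σ) + s ^ (1 + 2 * σ)) := by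
    have e0 := Real.rpow_nonneg hε.le (1 + 2 * σ)
    have s0 := Real.rpow_nonneg hs.le (1 + 2 * σ)
    rcases le_total ε s with h | h
    · calc (ε + s) ^ (1 + 2 * σ) ≤ (2 * s) ^ (1 + 2 * σ) :=
            Real.rpow_le_rpow (by linarith) (by linarith) hp
        _ = 2 ^ (1 + 2 * σ) * s ^ (1 + 2 * σ) := Real.mul_rpow (by norm_num) hs.le
        _ ≤ _ := by gcongr; linarith
    · calc (ε + s) ^ (1 + 2 * σ) ≤ (2 * ε) ^ (1 + 2 * σ) :=
            Real.rpow_le_rpow (by linarith) (by linarith) hp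
        _ = 2 ^ (1 + 2 * σ) * ε ^ (1 + 2 * σ) := Real.mul_rpow (by norm_num) hε.le
        _ ≤ _ := by gcongr; linarith
  have h2 : 0 < (ε + s) ^ (1 + 2 * σ) := Real.rpow_pos_of_pos (by linarith) _
  have h3 : 0 < ε ^ (1 + 2 * σ) + s ^ (1 + 2 * σ) := by positivity
  rw [← div_eq_mul_inv, le_div_iff₀ h2, inv_mul_le_iff₀ h3]
  linarith

lemma aux_int (σ ε r d : ℝ) (hσ : 0 < σ) (hε : 0 < ε) (hr : 0 < r) (hd : r < d) :
    (∫ s in Set.Icc (d - r) (d + r), (ε ^ (1 + 2 * σ) + |s| ^ (1 + 2 * σ))⁻¹) ≤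
      2 ^ (1 + 2 * σ) * ∫ x in (ε + d - r)..(ε + d + r), x ^ (-(1 + 2 * σ)) := by
  have hp : 0 ≤ 1 + 2 * σ := by linarith
  have e : (∫ x in (ε + d - r)..(ε + d + r), x ^ (-(1 + 2 * σ)))
      = ∫ s in (d - r)..(d + r), (ε + s) ^ (-(1 + 2 * σ)) := by
    rw [intervalIntegral.integral_comp_add_left (fun x => x ^ (-(1 + 2 * σ)))]
    congr 1 <;> ring
  rw [e, ← intervalIntegral.integral_const_mul, integral_Icc_eq_integral_Ioc,
    ← intervalIntegral.integral_of_le (by linarith)]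
  apply intervalIntegral.integral_mono_on (by linarith)
  · apply Continuous.intervalIntegrable
    apply Continuous.inv₀
    · exact continuous_const.add (continuous_abs.rpow_const fun x => Or.inr hp)
    · intro x
      have := Real.rpow_pos_of_pos hε (1 + 2 * σ)
      have := Real.rpow_nonneg (abs_nonneg x) (1 + 2 * σ)
      linarith
  · apply ContinuousOn.intervalIntegrable
    rw [uIcc_of_le (by linarith)]
    apply continuousOn_const.mul
    apply ContinuousOn.rpow_const (by fun_prop)
    intro x hx
    left
    have := hx.1
    linarith
  · intro x hx
    exact aux_pt σ ε x hσ hε (by linarith [hx.1])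

lemma aux_J1 (σ a r : ℝ) (hσ : 0 < σ) (ha : 0 < a) (hr : 0 < r) :
    (∫ x in a..(a + 2 * r), x ^ (-(1 + 2 * σ))) ≤ 1 / (2 * σ) * a ^ (-(2 * σ)) := by
  rw [integral_rpow]
  · have : -(1 + 2 * σ) + 1 = -(2 * σ) := by ring
    rw [this]
    have h1 : 0 ≤ (a + 2 * r) ^ (-(2 * σ)) := Real.rpow_nonneg (by linarith) _
    rw [div_neg, ← neg_div, div_mul_eq_mul_div, one_mul]
    gcongr
    linarith
  · right
    refine ⟨by linarith, ?_⟩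
    rw [uIcc_of_le (by linarith)]
    intro h
    linarith [h.1]

lemma aux_J2 (σ a r : ℝ) (hσ : 0 < σ) (ha : 0 < a) (hr : 0 < r) :
    (∫ x in a..(a + 2 * r), x ^ (-(1 + 2 * σ))) ≤ 2 * (r / a) * a ^ (-(2 * σ)) := by
  have h : (∫ x in a..(a + 2 * r), x ^ (-(1 + 2 * σ))) ≤
      ∫ x in a..(a + 2 * r), a ^ (-(1 + 2 * σ)) := by
    apply intervalIntegral.integral_mono_on (by linarith)
    · apply ContinuousOn.intervalIntegrable
      rw [uIcc_of_le (by linarith)]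
      apply ContinuousOn.rpow_const (by fun_prop)
      intro x hx
      left
      have := hx.1
      linarith
    · simp
    · intro x hx
      exact Real.rpow_le_rpow_of_nonpos ha hx.1 (by linarith)
  refine h.trans (le_of_eq ?_)
  rw [intervalIntegral.integral_const, neg_add, Real.rpow_add ha, Real.rpow_neg_one, smul_eq_mul]
  ring

/-- a one-dimensional integral estimate used for the barrier. -/
theorem statement16 (σ β₀ α : ℝ) (hσ : σ ∈ Set.Ioo (0 : ℝ) 1)
    (hβ₀ : β₀ ∈ Set.Ioo (0 : ℝ) (min 1 (2 * σ))) (hα : α ∈ Set.Ioo (0 : ℝ) β₀) :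
    ∃ C > (0 : ℝ), ∀ ε ∈ Set.Ioc (0 : ℝ) 1, ∀ r ∈ Set.Ioc (0 : ℝ) 1, ∀ d : ℝ, r < d →
      (ε + r) ^ β₀ * ∫ s in Set.Icc (d - r) (d + r), (ε ^ (1 + 2 * σ) + |s| ^ (1 + 2 * σ))⁻¹ ≤
        C * r ^ α * (ε + d - r) ^ (-(2 * σ)) := by
  obtain ⟨hσ0, -⟩ := hσ
  obtain ⟨hβ0, hβ⟩ := hβ₀
  obtain ⟨hα0, hαβ⟩ := hα
  have hβ1 : β₀ < 1 := hβ.trans_le (min_le_left _ _)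
  refine ⟨2 ^ β₀ * (2 ^ (1 + 2 * σ) * (2 + 1 / (2 * σ))), by positivity, ?_⟩
  rintro ε ⟨hε, -⟩ r ⟨hr, hr1⟩ d hd
  have hI := aux_int σ ε r d hσ0 hε hr hd
  have ha : 0 < ε + d - r := by linarith
  have haε : ε ≤ ε + d - r := by linarith
  rw [show ε + d + r = (ε + d - r) + 2 * r by ring] at hI
  have hJ1 := aux_J1 σ _ r hσ0 ha hr
  have hJ2 := aux_J2 σ _ r hσ0 ha hr
  generalize ε + d - r = a at *
  have hA : 0 < a ^ (-(2 * σ)) := Real.rpow_pos_of_pos ha _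
  have hrα : r ^ β₀ ≤ r ^ α := Real.rpow_le_rpow_of_exponent_ge hr hr1 hαβ.le
  have hrα0 : 0 < r ^ α := Real.rpow_pos_of_pos hr _
  have hσi : 0 < 1 / (2 * σ) := by positivity
  rcases le_total ε r with h | h
  · have h1 : (ε + r) ^ β₀ ≤ 2 ^ β₀ * r ^ α := by
      calc (ε + r) ^ β₀ ≤ (2 * r) ^ β₀ := Real.rpow_le_rpow (by linarith) (by linarith) hβ0.le
        _ = 2 ^ β₀ * r ^ β₀ := Real.mul_rpow (by norm_num) hr.le
        _ ≤ _ := by gcongr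
    calc _ ≤ (ε + r) ^ β₀ * (2 ^ (1 + 2 * σ) * (1 / (2 * σ) * a ^ (-(2 * σ)))) := by
            gcongr
            exact hI.trans (by gcongr)
      _ ≤ (2 ^ β₀ * r ^ α) * (2 ^ (1 + 2 * σ) * ((2 + 1 / (2 * σ)) * a ^ (-(2 * σ)))) := by
            gcongr
            linarith
      _ = _ := by ring
  · have h1 : (ε + r) ^ β₀ * (r / a) ≤ 2 ^ β₀ * r ^ α := by
      calc (ε + r) ^ β₀ * (r / a) ≤ (2 * ε) ^ β₀ * (r / ε) := by
            gcongr
            linarith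
        _ = 2 ^ β₀ * (r * ε ^ (β₀ - 1)) := by
            rw [Real.mul_rpow (by norm_num) hε.le, Real.rpow_sub_one hε.ne']
            ring
        _ ≤ 2 ^ β₀ * (r * r ^ (β₀ - 1)) := by
            gcongr 2 ^ β₀ * (r * ?_)
            exact Real.rpow_le_rpow_of_nonpos hr h (by linarith)
        _ = 2 ^ β₀ * r ^ β₀ := by
            rw [Real.rpow_sub_one hr.ne']
            field_simp
        _ ≤ _ := by gcongr
    calc _ ≤ (ε + r) ^ β₀ * (2 ^ (1 + 2 * σ) * (2 * (r / a) * a ^ (-(2 * σ)))) := by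
            gcongr
            exact hI.trans (by gcongr)
      _ = ((ε + r) ^ β₀ * (r / a)) * (2 ^ (1 + 2 * σ) * (2 * a ^ (-(2 * σ)))) := by ring
      _ ≤ (2 ^ β₀ * r ^ α) * (2 ^ (1 + 2 * σ) * ((2 + 1 / (2 * σ)) * a ^ (-(2 * σ)))) := by
            gcongr
            linarith
      _ = _ := by ring
end
end
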